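/- Let T be a scalar Calderón–Zygmund operator on ℝ^d with modulus of continuity ω satisfying the Dini condition, let ρ ∈ (2,∞), let ε ∈ (0,1), and suppose V_ρ(T_*) is bounded on L^q(ℝ^d) for some q ∈ (1,∞). Then for every cube Q₀ ⊂ ℝ^d and every f ∈ L^∞(ℝ^d) supported in Q₀, there exist pairwise disjoint dyadic subcubes {P_j} of Q₀ with Σ_j |P_j| ≤ ε|Q₀| such that for a.e. x ∈ Q₀, V_ρ(T_*(f χ_{3Q₀}))(x) ≤ C ⟨|f|⟩_{3Q₀} + Σ_j V_ρ(T_*(f χ_{3P_j}))(x) χ_{P_j}(x), where C depends only on T, ρ, ε and d. -/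

import Mathlib

open MeasureTheory Set Filter Classical
open scoped ENNReal
noncomputable section

abbrev Rd (d : ℕ) := EuclideanSpace ℝ (Fin d)

/-- An axis-parallel (half-open) cube in `ℝ^d`, given by its center and side length. -/
structure Cube (d : ℕ) where
  c : Fin d → ℝ
  l : ℝ
  hl : 0 < l

/-- The underlying (half-open) set of a cube. -/
def Cube.set {d : ℕ} (Q : Cube d) : Set (Rd d) :=
  {y | ∀ i, Q.c i - Q.l / 2 ≤ y i ∧ y i < Q.c i + Q.l / 2}

/-- The (half-open) set `tQ`, the cube concentric with `Q` of side length `t·ℓ(Q)`. -/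
def Cube.dilate {d : ℕ} (Q : Cube d) (t : ℝ) : Set (Rd d) :=
  {y | ∀ i, Q.c i - t * Q.l / 2 ≤ y i ∧ y i < Q.c i + t * Q.l / 2}

/-- The volume `|Q| = ℓ(Q)^d` of a cube, as an extended nonnegative real. -/
def Cube.vol {d : ℕ} (Q : Cube d) : ℝ≥0∞ := ENNReal.ofReal (Q.l ^ d)

/-- `Q` is one of the dyadic subcubes of `Q₀` obtained by repeated subdivision of `Q₀`
into `2^d` congruent subcubes. -/
def IsDyadicSubcube {d : ℕ} (Q₀ Q : Cube d) : Prop :=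
  ∃ (k : ℕ) (m : Fin d → ℕ), (∀ i, m i < 2 ^ k) ∧ Q.l = Q₀.l / 2 ^ k ∧
    ∀ i, Q.c i = Q₀.c i - Q₀.l / 2 + ((m i : ℝ) + 1 / 2) * (Q₀.l / 2 ^ k)
/-- A scalar Calderón–Zygmund operator on `ℝ^d` with Dini modulus of continuity:
a linear operator `T` bounded on `L²(ℝ^d)` associated with a kernel `K` satisfying the
size condition and the `ω`-smoothness condition, where `ω` is increasing, subadditive,
vanishes at `0`, and satisfies the Dini condition `∫₀¹ ω(t) dt/t < ∞`. -/
structure CZO (d : ℕ) where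
  K : Rd d → Rd d → ℝ
  measK : Measurable (Function.uncurry K)
  ω : ℝ → ℝ
  Cst : ℝ
  hCst : 0 < Cst
  ω_mono : MonotoneOn ω (Set.Ici 0)
  ω_zero : ω 0 = 0
  ω_subadd : ∀ s t : ℝ, 0 ≤ s → 0 ≤ t → ω (s + t) ≤ ω s + ω t
  dini : IntegrableOn (fun t => ω t / t) (Set.Ioo (0 : ℝ) 1)
  size : ∀ x y : Rd d, x ≠ y → |K x y| ≤ Cst / dist x y ^ d
  smooth : ∀ x x' y : Rd d, x ≠ y → dist x x' ≤ dist x y / 2 →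
    |K x y - K x' y| + |K y x - K y x'| ≤ Cst * ω (dist x x' / dist x y) / dist x y ^ d
  T : Lp ℝ 2 (volume : Measure (Rd d)) →L[ℝ] Lp ℝ 2 (volume : Measure (Rd d))
  assoc : ∀ f : Lp ℝ 2 (volume : Measure (Rd d)),
    ∀ᵐ x ∂(volume : Measure (Rd d)), x ∉ tsupport (f : Rd d → ℝ) →
      (T f : Rd d → ℝ) x = ∫ y, K x y * f y

/-- The truncated singular integral `T_ε f(x) = ∫_{|x-y|>ε} K(x,y) f(y) dy`. -/
def CZO.trunc {d : ℕ} (S : CZO d) (ε : ℝ) (f : Rd d → ℝ) (x : Rd d) : ℝ :=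
  ∫ y in {y : Rd d | ε < dist x y}, S.K x y * f y

/-- The variation operator `V_ρ(T_* f)(x)`, with values in `[0,∞]`: the supremum over all
strictly decreasing positive sequences `ε_i → 0` of `(Σ_i |T_{ε_{i+1}}f(x) - T_{ε_i}f(x)|^ρ)^{1/ρ}`. -/
def CZO.var {d : ℕ} (S : CZO d) (ρ : ℝ) (f : Rd d → ℝ) (x : Rd d) : ℝ≥0∞ :=
  ⨆ (ε : ℕ → ℝ) (_ : StrictAnti ε ∧ (∀ i, 0 < ε i) ∧ Tendsto ε atTop (nhds 0)),
    (∑' i : ℕ, ENNReal.ofReal |S.trunc (ε (i + 1)) f x - S.trunc (ε i) f x| ^ ρ) ^ (1 / ρ)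

/-- `V_ρ(T_*)` is bounded on `L^q(ℝ^d)`. -/
def CZO.VarBdd {d : ℕ} (S : CZO d) (ρ q : ℝ) : Prop :=
  ∃ A : ℝ, 0 < A ∧ ∀ f : Rd d → ℝ, Measurable f →
    ∫⁻ x, S.var ρ f x ^ q ∂volume ≤ ENNReal.ofReal A * ∫⁻ x, ENNReal.ofReal |f x| ^ q ∂volume

/-- The weak `(1,1)` operator (quasi-)norm `‖V_ρ(T_*)‖_{L¹ → L^{1,∞}}`. -/
def CZO.weak11Norm {d : ℕ} (S : CZO d) (ρ : ℝ) : ℝ≥0∞ :=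
  sInf {A : ℝ≥0∞ | ∀ f : Rd d → ℝ, Measurable f → ∀ t : ℝ, 0 < t →
    ENNReal.ofReal t * volume {x | ENNReal.ofReal t < S.var ρ f x} ≤
      A * ∫⁻ x, ENNReal.ofReal |f x| ∂volume}

/-- The local grand maximal truncated operator `M_{V_ρ(T_*),Q₀}`. -/
def CZO.grandMaxLoc {d : ℕ} (S : CZO d) (ρ : ℝ) (Q₀ : Cube d) (f : Rd d → ℝ) (x : Rd d) : ℝ≥0∞ :=
  if x ∈ Q₀.set then
    ⨆ (Q : Cube d) (_ : x ∈ Q.set ∧ Q.set ⊆ Q₀.set),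
      essSup (fun ξ => S.var ρ ((Q₀.dilate 3 \ Q.dilate 3).indicator f) ξ)
        (volume.restrict Q.set)
  else 0

/-- The (global) grand maximal truncated operator `M_{V_ρ(T_*)}`. -/
def CZO.grandMax {d : ℕ} (S : CZO d) (ρ : ℝ) (f : Rd d → ℝ) (x : Rd d) : ℝ≥0∞ :=
  ⨆ (Q : Cube d) (_ : x ∈ Q.set),
    essSup (fun ξ => S.var ρ (((Q.dilate 3)ᶜ).indicator f) ξ) (volume.restrict Q.set)

/-- The Hardy–Littlewood maximal operator over cubes, with values in `[0,∞]`. -/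
def maxCube {d : ℕ} (f : Rd d → ℝ) (x : Rd d) : ℝ≥0∞ :=
  ⨆ (Q : Cube d) (_ : x ∈ Q.set), Q.vol⁻¹ * ∫⁻ y in Q.set, ENNReal.ofReal |f y|

/-- The average `⟨|f|⟩_{3Q} = (1/|3Q|) ∫_{3Q} |f|`. -/
def avg3 {d : ℕ} (Q : Cube d) (f : Rd d → ℝ) : ℝ :=
  (∫ y in Q.dilate 3, |f y|) / (3 * Q.l) ^ d
/-- The Euclidean norm of a vector in `ℝ^n`. -/
def enorm' {n : ℕ} (v : Fin n → ℝ) : ℝ := Real.sqrt (∑ i, v i ^ 2)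

/-- The operator norm (with respect to Euclidean norms) of an `n × n` real matrix. -/
def matOpNorm {n : ℕ} (A : Matrix (Fin n) (Fin n) ℝ) : ℝ :=
  sSup ((fun v => enorm' (A.mulVec v)) '' {v | enorm' v ≤ 1})

/-- The spectral power `A^s` of a symmetric matrix `A = U D Uᵗ`, defined as `U D^s Uᵗ`
(junk value `A` if `A` is not symmetric). -/
def Matrix.rpowH {n : ℕ} (A : Matrix (Fin n) (Fin n) ℝ) (s : ℝ) : Matrix (Fin n) (Fin n) ℝ :=
  if h : A.IsHermitian then
    (h.eigenvectorUnitary : Matrix (Fin n) (Fin n) ℝ) *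
      Matrix.diagonal (fun i => h.eigenvalues i ^ s) *
      star (h.eigenvectorUnitary : Matrix (Fin n) (Fin n) ℝ)
  else A

/-- A matrix weight on `ℝ^d`: a measurable function with a.e. symmetric positive definite
values whose operator norm is locally integrable. -/
structure MatrixWeight (d n : ℕ) where
  W : Rd d → Matrix (Fin n) (Fin n) ℝ
  meas : ∀ i j, Measurable fun x => W x i j
  pd : ∀ᵐ x : Rd d, (W x).PosDef
  locInt : LocallyIntegrable (fun x => matOpNorm (W x)) (volume : Measure (Rd d))

/-- The matrix `A_p` characteristic `[W]_{A_p}`. -/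
def MatrixWeight.apConst {d n : ℕ} (W : MatrixWeight d n) (p : ℝ) : ℝ≥0∞ :=
  ⨆ Q : Cube d, Q.vol⁻¹ * ∫⁻ x in Q.set,
    (Q.vol⁻¹ * ∫⁻ t in Q.set,
        ENNReal.ofReal (matOpNorm ((W.W x).rpowH (1 / p) * (W.W t).rpowH (-(1 / p))))
          ^ (p / (p - 1))) ^ (p - 1)

/-- The norm of `f` in `L^p(W)`. -/
def MatrixWeight.wNorm {d n : ℕ} (W : MatrixWeight d n) (p : ℝ)
    (f : Rd d → Fin n → ℝ) : ℝ≥0∞ :=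
  (∫⁻ x, ENNReal.ofReal (enorm' (((W.W x).rpowH (1 / p)).mulVec (f x))) ^ p) ^ (1 / p)

/-- The Euclidean length `|V_ρ(T_{n,*} f⃗)(x)|` of the componentwise variation vector
(with values in `[0,∞]`). -/
def CZO.varVecNorm {d : ℕ} (n : ℕ) (S : CZO d) (ρ : ℝ) (f : Rd d → Fin n → ℝ)
    (x : Rd d) : ℝ≥0∞ :=
  (∑ j : Fin n, S.var ρ (fun y => f y j) x ^ (2 : ℝ)) ^ ((1 : ℝ) / 2)

/-- An `η`-sparse family of cubes. -/
def IsSparse {d : ℕ} (η : ℝ) (F : Set (Cube d)) : Prop :=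
  ∃ E : Cube d → Set (Rd d),
    (∀ Q ∈ F, E Q ⊆ Q.set ∧ MeasurableSet (E Q) ∧ ENNReal.ofReal η * Q.vol ≤ volume (E Q)) ∧
    F.PairwiseDisjoint E

/-- The convex body average `⟨⟨f⃗⟩⟩_{tQ}` of a vector-valued function over the cube `tQ`. -/
def convexBodyAvg {d n : ℕ} (f : Rd d → Fin n → ℝ) (Q : Cube d) (t : ℝ) :
    Set (Fin n → ℝ) :=
  {v | ∃ φ : Rd d → ℝ, Measurable φ ∧ (∀ y, |φ y| ≤ 1) ∧
    ∀ j, v j = (∫ y in Q.dilate t, φ y * f y j) / (t * Q.l) ^ d}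


/-! ### Dyadic cubes -/

def dyCube {d : ℕ} (Q₀ : Cube d) (k : ℕ) (m : Fin d → ℕ) : Cube d where
  c := fun i => Q₀.c i - Q₀.l / 2 + ((m i : ℝ) + 1 / 2) * (Q₀.l / 2 ^ k)
  l := Q₀.l / 2 ^ k
  hl := by have := Q₀.hl; positivity

def dyIdx {d : ℕ} (Q₀ : Cube d) (k : ℕ) (x : Rd d) : Fin d → ℕ :=
  fun i => ⌊(x i - (Q₀.c i - Q₀.l / 2)) / Q₀.l * 2 ^ k⌋₊

theorem Cube.eq_of {d : ℕ} {P Q : Cube d} (h1 : P.c = Q.c) (h2 : P.l = Q.l) : P = Q := by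
  cases P; cases Q; simp_all

theorem isDyadic_iff {d : ℕ} (Q₀ Q : Cube d) :
    IsDyadicSubcube Q₀ Q ↔ ∃ k m, (∀ i, m i < 2 ^ k) ∧ Q = dyCube Q₀ k m := by
  constructor
  · rintro ⟨k, m, h1, h2, h3⟩
    exact ⟨k, m, h1, Cube.eq_of (funext h3) h2⟩
  · rintro ⟨k, m, h1, rfl⟩
    exact ⟨k, m, h1, rfl, fun i => rfl⟩

theorem dyCube_zero {d : ℕ} (Q₀ : Cube d) : dyCube Q₀ 0 (fun _ => 0) = Q₀ := by
  apply Cube.eq_of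
  · funext i; simp [dyCube]; ring
  · simp [dyCube]

theorem mem_dyCube_aux (a l t k2 m : ℝ) (hl : 0 < l) (hk : 0 < k2) :
    ((a - l / 2 + (m + 1 / 2) * (l / k2) - l / k2 / 2 ≤ t ∧
      t < a - l / 2 + (m + 1 / 2) * (l / k2) + l / k2 / 2) ↔
    (m ≤ (t - (a - l / 2)) / l * k2 ∧ (t - (a - l / 2)) / l * k2 < m + 1)) := by
  set u := (t - (a - l / 2)) / l * k2 with hu
  have ht : t = a - l / 2 + u * (l / k2) := by rw [hu]; field_simp; ring
  have hp : 0 < l / k2 := by positivity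
  rw [ht]
  constructor
  · rintro ⟨h1, h2⟩
    constructor
    · by_contra! h
      nlinarith
    · by_contra! h
      nlinarith
  · rintro ⟨h1, h2⟩
    constructor <;> nlinarith

theorem mem_dyCube {d : ℕ} (Q₀ : Cube d) (k : ℕ) (m : Fin d → ℕ) (x : Rd d) :
    x ∈ (dyCube Q₀ k m).set ↔ ∀ i, (m i : ℝ) ≤ (x i - (Q₀.c i - Q₀.l / 2)) / Q₀.l * 2 ^ k ∧
      (x i - (Q₀.c i - Q₀.l / 2)) / Q₀.l * 2 ^ k < m i + 1 := by
  have := Q₀.hl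
  simp only [Cube.set, dyCube, Set.mem_setOf_eq]
  exact forall_congr' fun i => mem_dyCube_aux _ _ _ _ _ this (by positivity)

theorem dyIdx_eq {d : ℕ} {Q₀ : Cube d} {k : ℕ} {m : Fin d → ℕ} {x : Rd d}
    (h : x ∈ (dyCube Q₀ k m).set) : dyIdx Q₀ k x = m := by
  rw [mem_dyCube] at h
  funext i
  obtain ⟨h1, h2⟩ := h i
  unfold dyIdx
  rw [Nat.floor_eq_iff (le_trans (by positivity) h1)]
  exact ⟨h1, h2⟩

theorem mem_Q0_iff {d : ℕ} (Q₀ : Cube d) (x : Rd d) :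
    x ∈ Q₀.set ↔ ∀ i, 0 ≤ (x i - (Q₀.c i - Q₀.l / 2)) / Q₀.l ∧
      (x i - (Q₀.c i - Q₀.l / 2)) / Q₀.l < 1 := by
  conv_lhs => rw [← dyCube_zero Q₀]
  rw [mem_dyCube]
  simp

theorem mem_dyIdx {d : ℕ} {Q₀ : Cube d} (k : ℕ) {x : Rd d} (hx : x ∈ Q₀.set) :
    x ∈ (dyCube Q₀ k (dyIdx Q₀ k x)).set := by
  rw [mem_Q0_iff] at hx
  rw [mem_dyCube]
  intro i
  have h0 : 0 ≤ (x i - (Q₀.c i - Q₀.l / 2)) / Q₀.l * 2 ^ k := mul_nonneg (hx i).1 (by positivity)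
  exact ⟨Nat.floor_le h0, Nat.lt_floor_add_one _⟩

theorem dyIdx_lt {d : ℕ} {Q₀ : Cube d} (k : ℕ) {x : Rd d} (hx : x ∈ Q₀.set) (i : Fin d) :
    dyIdx Q₀ k x i < 2 ^ k := by
  rw [mem_Q0_iff] at hx
  have h0 : 0 ≤ (x i - (Q₀.c i - Q₀.l / 2)) / Q₀.l * 2 ^ k := mul_nonneg (hx i).1 (by positivity)
  unfold dyIdx
  rw [Nat.floor_lt h0]
  push_cast
  have : (0:ℝ) < 2 ^ k := by positivity
  nlinarith [(hx i).2]

theorem dyCube_sub {d : ℕ} (Q₀ : Cube d) (k : ℕ) (m : Fin d → ℕ) (hm : ∀ i, m i < 2 ^ k) :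
    (dyCube Q₀ k m).set ⊆ Q₀.set := by
  intro x hx
  rw [mem_dyCube] at hx
  rw [mem_Q0_iff]
  intro i
  obtain ⟨h1, h2⟩ := hx i
  have hk : (0:ℝ) < 2 ^ k := by positivity
  have h3 : ((m i : ℝ) + 1) ≤ 2 ^ k := by exact_mod_cast hm i
  have h4 : (0:ℝ) ≤ m i := by positivity
  constructor
  · by_contra! h; nlinarith
  · by_contra! h; nlinarith

theorem dyIdx_div {d : ℕ} (Q₀ : Cube d) (j k : ℕ) (hjk : j ≤ k) (x : Rd d) :
    dyIdx Q₀ j x = fun i => dyIdx Q₀ k x i / 2 ^ (k - j) := by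
  funext i
  unfold dyIdx
  have := Nat.floor_div_natCast ((x i - (Q₀.c i - Q₀.l / 2)) / Q₀.l * 2 ^ k) (2 ^ (k - j))
  rw [← this]
  congr 1
  push_cast
  rw [mul_div_assoc]
  congr 1
  rw [eq_div_iff (by positivity), ← pow_add]
  congr 1
  omega

theorem dyCube_center_mem {d : ℕ} (Q : Cube d) : (WithLp.toLp 2 Q.c : Rd d) ∈ Q.set := by
  intro i
  have := Q.hl
  constructor
  · simp; positivity
  · simp; positivity

theorem maximal_cubes {d : ℕ} (Q₀ : Cube d) (p : Cube d → Prop) :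
    ∃ F : Set (Cube d), F.Countable ∧
      (∀ P ∈ F, IsDyadicSubcube Q₀ P ∧ p P ∧ P.set ⊆ Q₀.set) ∧
      F.PairwiseDisjoint Cube.set ∧
      (∀ Q, IsDyadicSubcube Q₀ Q → p Q → Q.set ⊆ ⋃ P ∈ F, P.set) ∧
      (¬ p Q₀ → ∀ P ∈ F, ∃ P', P'.set ⊆ Q₀.set ∧ P.set ⊆ P'.set ∧ P'.l = 2 * P.l ∧ IsDyadicSubcube Q₀ P' ∧ ¬ p P') := by
  set I : Set (ℕ × (Fin d → ℕ)) := {a | (∀ i, a.2 i < 2 ^ a.1) ∧ p (dyCube Q₀ a.1 a.2) ∧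
    ∀ j < a.1, ¬ p (dyCube Q₀ j (fun i => a.2 i / 2 ^ (a.1 - j)))} with hI
  refine ⟨(fun a => dyCube Q₀ a.1 a.2) '' I, (Set.to_countable I).image _, ?_, ?_, ?_, ?_⟩
  · rintro P ⟨⟨k, m⟩, ⟨h1, h2, h3⟩, rfl⟩
    exact ⟨(isDyadic_iff _ _).2 ⟨k, m, h1, rfl⟩, h2, dyCube_sub _ _ _ h1⟩
  · rintro P ⟨⟨k, m⟩, ⟨h1, h2, h3⟩, rfl⟩ P' ⟨⟨k', m'⟩, ⟨h1', h2', h3'⟩, rfl⟩ hne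
    simp only at *
    rw [Function.onFun, Set.disjoint_left]
    intro x hx hx'
    have e := dyIdx_eq hx
    have e' := dyIdx_eq hx'
    rcases lt_trichotomy k k' with h | h | h
    · apply h3' k h
      have := dyIdx_div Q₀ k k' h.le x
      rw [e, e'] at this
      rw [← this]; exact h2
    · subst h
      exact hne (by rw [← e, e'])
    · apply h3 k' h
      have := dyIdx_div Q₀ k' k h.le x
      rw [e, e'] at this
      rw [← this]; exact h2'
  · intro Q hQ hp x hx
    obtain ⟨k, m, hm, rfl⟩ := (isDyadic_iff _ _).1 hQ
    have hx0 := dyCube_sub _ _ _ hm hx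
    have hex : ∃ k, p (dyCube Q₀ k (dyIdx Q₀ k x)) := ⟨k, by rw [dyIdx_eq hx]; exact hp⟩
    have hs := Nat.find_spec hex
    have hmin := fun j (hj : j < Nat.find hex) => Nat.find_min hex hj
    set n := Nat.find hex
    rw [Set.mem_iUnion₂]
    refine ⟨_, ⟨(n, dyIdx Q₀ n x), ⟨dyIdx_lt n hx0, hs, ?_⟩, rfl⟩, mem_dyIdx n hx0⟩
    intro j hj
    have := hmin j hj
    rwa [dyIdx_div Q₀ j n hj.le x] at this
  · rintro h0 P ⟨⟨k, m⟩, ⟨h1, h2, h3⟩, rfl⟩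
    simp only at *
    have hk : k ≠ 0 := by
      rintro rfl
      apply h0
      have : m = fun _ => 0 := by funext i; simpa using h1 i
      rw [this, dyCube_zero] at h2
      exact h2
    obtain ⟨k, rfl⟩ := Nat.exists_eq_succ_of_ne_zero hk
    have hv : ∀ i, m i / 2 < 2 ^ k := fun i => by
      have := h1 i; rw [pow_succ] at this; omega
    refine ⟨dyCube Q₀ k (fun i => m i / 2), dyCube_sub _ _ _ hv, ?_, ?_, ?_, ?_⟩
    · intro x hx
      have hx0 := dyCube_sub _ _ _ h1 hx
      have := mem_dyIdx k hx0
      rw [dyIdx_div Q₀ k (k+1) (by omega) x, dyIdx_eq hx] at this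
      simpa using this
    · simp only [dyCube, pow_succ]; field_simp
    · exact (isDyadic_iff _ _).2 ⟨k, _, hv, rfl⟩
    · simpa using h3 k (Nat.lt_succ_self k)

theorem Cube.set_eq {d : ℕ} (Q : Cube d) : Q.set = (WithLp.ofLp : Rd d → (Fin d → ℝ)) ⁻¹'
    (Set.univ.pi fun i => Set.Ico (Q.c i - Q.l / 2) (Q.c i + Q.l / 2)) := by
  ext x; simp [Cube.set]

theorem Cube.meas {d : ℕ} (Q : Cube d) : MeasurableSet Q.set := by
  rw [Q.set_eq]
  exact (PiLp.volume_preserving_ofLp (Fin d)).measurable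
    (MeasurableSet.univ_pi fun i => measurableSet_Ico)

theorem Cube.volume_set {d : ℕ} (Q : Cube d) : volume Q.set = Q.vol := by
  rw [Q.set_eq, (PiLp.volume_preserving_ofLp (Fin d)).measure_preimage
    (MeasurableSet.univ_pi fun i => measurableSet_Ico).nullMeasurableSet, Real.volume_pi_Ico]
  have : ∀ i, Q.c i + Q.l / 2 - (Q.c i - Q.l / 2) = Q.l := fun i => by ring
  simp only [this, Finset.prod_const, Cube.vol, Finset.card_univ, Fintype.card_fin]
  rw [ENNReal.ofReal_pow Q.hl.le]

theorem Cube.vol_pos {d : ℕ} (Q : Cube d) : 0 < Q.vol := by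
  have := Q.hl
  unfold Cube.vol; rw [ENNReal.ofReal_pos]; positivity

theorem Cube.vol_ne_top {d : ℕ} (Q : Cube d) : Q.vol ≠ ∞ := ENNReal.ofReal_ne_top

/-- the Euclidean diameter bound -/
def Cube.dm {d : ℕ} (Q : Cube d) : ℝ := (d : ℝ) * Q.l

def Cube.ctr {d : ℕ} (Q : Cube d) : Rd d := WithLp.toLp 2 Q.c

theorem dist_le_of_coord {d : ℕ} (x y : Rd d) (l : ℝ) (h : ∀ i, |x i - y i| ≤ l) :
    dist x y ≤ d * l := by
  rw [EuclideanSpace.dist_eq]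
  calc √(∑ i, dist (x i) (y i) ^ 2) ≤ ∑ i, dist (x i) (y i) := by
        rw [Real.sqrt_le_left (Finset.sum_nonneg fun i _ => dist_nonneg)]
        exact Finset.sum_sq_le_sq_sum_of_nonneg fun i _ => dist_nonneg
    _ ≤ ∑ i : Fin d, l := Finset.sum_le_sum fun i _ => by rw [Real.dist_eq]; exact h i
    _ = d * l := by simp

theorem coord_le_dist {d : ℕ} (x y : Rd d) (i : Fin d) : |x i - y i| ≤ dist x y := by
  rw [dist_eq_norm]
  simpa using PiLp.norm_apply_le (x - y) i

theorem Cube.dist_le {d : ℕ} (Q : Cube d) {x y : Rd d} (hx : x ∈ Q.set) (hy : y ∈ Q.set) :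
    dist x y ≤ Q.dm := by
  apply dist_le_of_coord
  intro i
  have h1 := hx i
  have h2 := hy i
  rw [abs_le]; constructor <;> linarith

theorem small_cube {d : ℕ} (Q₀ : Cube d) (U : Set (Rd d)) (hU : IsOpen U) (x : Rd d)
    (hx : x ∈ Q₀.set) (hxU : x ∈ U) :
    ∃ Q, IsDyadicSubcube Q₀ Q ∧ Q.set ⊆ U ∧ x ∈ Q.set := by
  obtain ⟨r, hr, hrU⟩ := Metric.isOpen_iff.1 hU x hxU
  obtain ⟨k, hk⟩ : ∃ k : ℕ, d * (Q₀.l / 2 ^ k) < r := by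
    have h1 : Tendsto (fun k : ℕ => (d * Q₀.l) * (1 / 2 : ℝ) ^ k) atTop (nhds ((d * Q₀.l) * 0)) :=
      (tendsto_pow_atTop_nhds_zero_of_lt_one (by norm_num) (by norm_num)).const_mul _
    rw [mul_zero] at h1
    obtain ⟨k, hk⟩ := (h1.eventually (gt_mem_nhds hr)).exists
    refine ⟨k, ?_⟩
    simp only [one_div, inv_pow] at hk
    rwa [div_eq_mul_inv, ← mul_assoc]
  refine ⟨dyCube Q₀ k (dyIdx Q₀ k x), (isDyadic_iff _ _).2 ⟨k, _, dyIdx_lt k hx, rfl⟩, ?_, mem_dyIdx k hx⟩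
  intro y hy
  apply hrU
  rw [Metric.mem_ball]
  exact lt_of_le_of_lt (Cube.dist_le _ hy (mem_dyIdx k hx)) hk

/-! ### Numerical integrals -/

def kap (d : ℕ) : ℝ≥0∞ := volume (Metric.ball (0 : Rd d) 1)

theorem kap_ne_top (d : ℕ) : kap d ≠ ∞ := measure_ball_lt_top.ne

theorem vol_cball {d : ℕ} (x : Rd d) {r : ℝ} (hr : 0 ≤ r) :
    volume (Metric.closedBall x r) = ENNReal.ofReal (r ^ d) * kap d := by
  rw [Measure.addHaar_closedBall _ _ hr, finrank_euclideanSpace_fin]; rfl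

def CZO.phi {d : ℕ} (S : CZO d) (t : ℝ) : ℝ := S.ω (max t 0) + √t

theorem CZO.ω_nonneg {d : ℕ} (S : CZO d) {t : ℝ} (ht : 0 ≤ t) : 0 ≤ S.ω t := by
  rw [← S.ω_zero]; exact S.ω_mono (by simp) ht ht

theorem CZO.phi_mono {d : ℕ} (S : CZO d) : Monotone S.phi := by
  intro s t hst
  unfold CZO.phi
  exact add_le_add (S.ω_mono (by simp) (by simp) (max_le_max hst le_rfl)) (Real.sqrt_le_sqrt hst)

theorem CZO.phi_nonneg {d : ℕ} (S : CZO d) (t : ℝ) : 0 ≤ S.phi t :=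
  add_nonneg (S.ω_nonneg (by simp)) (Real.sqrt_nonneg _)

theorem CZO.phi_two {d : ℕ} (S : CZO d) {t : ℝ} (ht : 0 ≤ t) : S.phi (2 * t) ≤ 2 * S.phi t := by
  unfold CZO.phi
  rw [max_eq_left ht, max_eq_left (by positivity)]
  have h1 := S.ω_subadd t t ht ht
  have h2 : √(2 * t) ≤ 2 * √t := by
    rw [Real.sqrt_le_left (by positivity), mul_pow, Real.sq_sqrt ht]; nlinarith
  rw [two_mul t] at h2 ⊢
  linarith

theorem CZO.ω_le_phi {d : ℕ} (S : CZO d) {t : ℝ} (ht : 0 ≤ t) : S.ω t ≤ S.phi t := by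
  unfold CZO.phi; rw [max_eq_left ht]; linarith [Real.sqrt_nonneg t]

theorem CZO.sqrt_le_phi {d : ℕ} (S : CZO d) (t : ℝ) : √t ≤ S.phi t := by
  unfold CZO.phi; linarith [S.ω_nonneg (le_max_right t 0)]

theorem CZO.ω_sum {d : ℕ} (S : CZO d) : ∑' k : ℕ, ENNReal.ofReal (S.ω ((1 / 2) ^ (k + 1))) ≠ ∞ := by
  have hfin : ∫⁻ t in Set.Ioo (0:ℝ) 1, ENNReal.ofReal (S.ω t / t) ≠ ∞ := by
    have := S.dini.lintegral_lt_top
    exact this.ne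
  have hdisj : Pairwise (Function.onFun Disjoint
      (fun k : ℕ => Set.Ioo (((1:ℝ) / 2) ^ (k + 1)) ((1 / 2) ^ k))) := by
    have hanti : Antitone (fun k : ℕ => ((1:ℝ) / 2) ^ k) := fun a b hab =>
      pow_le_pow_of_le_one (by norm_num) (by norm_num) hab
    have := hanti.pairwise_disjoint_on_Ioo_succ
    exact this
  have hterm : ∀ k : ℕ, ENNReal.ofReal (S.ω ((1 / 2) ^ (k + 1))) ≤
      2 * ∫⁻ t in Set.Ioo (((1:ℝ) / 2) ^ (k + 1)) ((1 / 2) ^ k), ENNReal.ofReal (S.ω t / t) := by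
    intro k
    have hp : (0:ℝ) < (1 / 2) ^ (k + 1) := by positivity
    have h1 : ∫⁻ t in Set.Ioo (((1:ℝ) / 2) ^ (k + 1)) ((1 / 2) ^ k),
        ENNReal.ofReal (S.ω ((1 / 2) ^ (k + 1)) / (1 / 2) ^ k) ≤
        ∫⁻ t in Set.Ioo (((1:ℝ) / 2) ^ (k + 1)) ((1 / 2) ^ k), ENNReal.ofReal (S.ω t / t) := by
      apply setLIntegral_mono' measurableSet_Ioo
      intro t ht
      apply ENNReal.ofReal_le_ofReal
      have ht0 : 0 < t := hp.trans ht.1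
      have := S.ω_mono hp.le ht0.le ht.1.le
      have h0 := S.ω_nonneg hp.le
      exact div_le_div₀ (S.ω_nonneg ht0.le) this ht0 ht.2.le
    rw [setLIntegral_const, Real.volume_Ioo, ← ENNReal.ofReal_mul (by
      have := S.ω_nonneg hp.le; positivity)] at h1
    calc ENNReal.ofReal (S.ω ((1 / 2) ^ (k + 1)))
        = 2 * ENNReal.ofReal (S.ω ((1 / 2) ^ (k + 1)) / (1 / 2) ^ k * ((1 / 2) ^ k - (1 / 2) ^ (k + 1))) := by
          rw [show (2:ℝ≥0∞) = ENNReal.ofReal 2 by simp, ← ENNReal.ofReal_mul (by norm_num)]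
          congr 1
          have : ((1:ℝ)/2)^k ≠ 0 := by positivity
          generalize S.ω ((1 / 2) ^ (k + 1)) = w
          rw [pow_succ]; field_simp; ring
      _ ≤ _ := by gcongr
  have : ∑' k : ℕ, ENNReal.ofReal (S.ω ((1 / 2) ^ (k + 1))) ≤
      2 * ∫⁻ t in Set.Ioo (0:ℝ) 1, ENNReal.ofReal (S.ω t / t) := by
    calc _ ≤ ∑' k : ℕ, 2 * ∫⁻ t in Set.Ioo (((1:ℝ) / 2) ^ (k + 1)) ((1 / 2) ^ k), ENNReal.ofReal (S.ω t / t) :=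
          ENNReal.tsum_le_tsum hterm
      _ = 2 * ∫⁻ t in ⋃ k : ℕ, Set.Ioo (((1:ℝ) / 2) ^ (k + 1)) ((1 / 2) ^ k), ENNReal.ofReal (S.ω t / t) := by
          rw [ENNReal.tsum_mul_left, lintegral_iUnion (fun _ => measurableSet_Ioo) hdisj]
      _ ≤ _ := by
          gcongr
          intro t ht
          rw [Set.mem_iUnion] at ht
          obtain ⟨k, hk⟩ := ht
          exact ⟨lt_trans (by positivity) hk.1, hk.2.trans_le (pow_le_one₀ (by norm_num) (by norm_num))⟩
  exact ne_top_of_le_ne_top (ENNReal.mul_ne_top (by simp) hfin) this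

theorem sqrt_half_pow (k : ℕ) : √((1 / 2 : ℝ) ^ k) = (√(1 / 2)) ^ k := by
  rw [Real.sqrt_eq_iff_mul_self_eq (by positivity) (by positivity), ← mul_pow,
    Real.mul_self_sqrt (by norm_num)]

theorem sum_sqrt_half : Summable (fun k : ℕ => (√(1 / 2 : ℝ)) ^ k) := by
  apply summable_geometric_of_lt_one (Real.sqrt_nonneg _)
  rw [Real.sqrt_lt' (by norm_num)]; norm_num

theorem CZO.phi_sum {d : ℕ} (S : CZO d) : ∑' k : ℕ, ENNReal.ofReal (S.phi ((1 / 2) ^ k)) ≠ ∞ := by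
  have h1 : ∑' k : ℕ, ENNReal.ofReal (S.ω ((1 / 2) ^ k)) ≠ ∞ := by
    rw [tsum_eq_zero_add' ENNReal.summable]
    exact ENNReal.add_ne_top.2 ⟨ENNReal.ofReal_ne_top, S.ω_sum⟩
  have h2 : ∑' k : ℕ, ENNReal.ofReal (√((1 / 2) ^ k)) ≠ ∞ := by
    simp_rw [sqrt_half_pow]
    exact sum_sqrt_half.tsum_ofReal_ne_top
  have : ∀ k : ℕ, ENNReal.ofReal (S.phi ((1 / 2) ^ k)) =
      ENNReal.ofReal (S.ω ((1 / 2) ^ k)) + ENNReal.ofReal (√((1 / 2) ^ k)) := by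
    intro k
    unfold CZO.phi
    rw [max_eq_left (by positivity), ENNReal.ofReal_add (S.ω_nonneg (by positivity)) (Real.sqrt_nonneg _)]
  simp_rw [this]
  rw [ENNReal.tsum_add]
  exact ENNReal.add_ne_top.2 ⟨h1, h2⟩

theorem CZO.phi_integral {d : ℕ} (S : CZO d) : ∃ C : ℝ≥0∞, C ≠ ∞ ∧ ∀ (c : Rd d) (δ : ℝ), 0 < δ →
    ∫⁻ z in {z | δ ≤ dist c z}, ENNReal.ofReal (S.phi (δ / dist c z) / dist c z ^ d) ≤ C := by
  refine ⟨∑' k : ℕ, ENNReal.ofReal (S.phi ((1 / 2) ^ k)) * (ENNReal.ofReal (2 ^ d) * kap d), ?_, ?_⟩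
  · rw [ENNReal.tsum_mul_right]
    exact ENNReal.mul_ne_top S.phi_sum (ENNReal.mul_ne_top ENNReal.ofReal_ne_top (kap_ne_top d))
  intro c δ hδ
  have hm : ∀ k : ℕ, MeasurableSet {z : Rd d | 2 ^ k * δ ≤ dist c z ∧ dist c z ≤ 2 ^ (k + 1) * δ} := by
    intro k
    have hd1 : Measurable (fun y : Rd d => dist c y) := by fun_prop
    exact (measurableSet_le measurable_const hd1).inter
      (measurableSet_le hd1 measurable_const)
  have hsub : {z : Rd d | δ ≤ dist c z} ⊆
      ⋃ k : ℕ, {z : Rd d | 2 ^ k * δ ≤ dist c z ∧ dist c z ≤ 2 ^ (k + 1) * δ} := by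
    intro z hz
    have h1 : 1 ≤ dist c z / δ := by rw [le_div_iff₀ hδ]; simpa using hz
    obtain ⟨n, hn1, hn2⟩ := exists_nat_pow_near h1 (by norm_num : (1:ℝ) < 2)
    rw [Set.mem_iUnion]
    rw [le_div_iff₀ hδ] at hn1
    rw [div_lt_iff₀ hδ] at hn2
    exact ⟨n, hn1, hn2.le⟩
  refine (lintegral_mono_set hsub).trans ((lintegral_iUnion_le _ _).trans (ENNReal.tsum_le_tsum ?_))
  intro k
  calc _ ≤ ∫⁻ z in {z : Rd d | 2 ^ k * δ ≤ dist c z ∧ dist c z ≤ 2 ^ (k + 1) * δ},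
        ENNReal.ofReal (S.phi ((1 / 2) ^ k) / (2 ^ k * δ) ^ d) := by
        apply setLIntegral_mono' (hm k)
        rintro z ⟨hz1, hz2⟩
        apply ENNReal.ofReal_le_ofReal
        have h0 : 0 < 2 ^ k * δ := by positivity
        apply div_le_div₀ (S.phi_nonneg _) _ (by positivity) (by gcongr)
        apply S.phi_mono
        rw [div_le_iff₀ (h0.trans_le hz1), one_div, inv_pow, inv_mul_eq_div, le_div_iff₀ (by positivity)]
        linarith
    _ = ENNReal.ofReal (S.phi ((1 / 2) ^ k) / (2 ^ k * δ) ^ d) *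
          volume {z : Rd d | 2 ^ k * δ ≤ dist c z ∧ dist c z ≤ 2 ^ (k + 1) * δ} := setLIntegral_const _ _
    _ ≤ ENNReal.ofReal (S.phi ((1 / 2) ^ k) / (2 ^ k * δ) ^ d) *
          volume (Metric.closedBall c (2 ^ (k + 1) * δ)) := by
        gcongr
        intro z hz
        rw [Metric.mem_closedBall, dist_comm]; exact hz.2
    _ = _ := by
        rw [vol_cball _ (by positivity), ← mul_assoc, ← mul_assoc,
          ← ENNReal.ofReal_mul (div_nonneg (S.phi_nonneg _) (by positivity)),
          ← ENNReal.ofReal_mul (S.phi_nonneg _)]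
        congr 2
        rw [pow_succ, mul_comm _ (2:ℝ), mul_assoc, mul_pow 2]
        have : (2 ^ k * δ) ^ d ≠ 0 := by positivity
        field_simp

def psi {d : ℕ} (x : Rd d) (s : ℝ) (y : Rd d) : ℝ≥0∞ :=
  Set.indicator {y | s / 2 ≤ dist x y ∧ dist x y ≤ 2 * s}
    (fun y => ENNReal.ofReal (√(dist x y) / dist x y ^ d) *
      (ENNReal.ofReal √|dist x y - s|)⁻¹) y

theorem psi_integral (d : ℕ) (hd : 0 < d) : ∃ C : ℝ≥0∞, C ≠ ∞ ∧ ∀ (x : Rd d) (s : ℝ), 0 < s →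
    ∫⁻ y, psi x s y ≤ C := by
  refine ⟨∑' k : ℕ, ENNReal.ofReal (√(1 / 2) ^ k) * (ENNReal.ofReal (4 * d * 4 ^ d) * kap d), ?_, ?_⟩
  · rw [ENNReal.tsum_mul_right]
    exact ENNReal.mul_ne_top sum_sqrt_half.tsum_ofReal_ne_top
      (ENNReal.mul_ne_top ENNReal.ofReal_ne_top (kap_ne_top d))
  intro x s hs
  have : Nonempty (Fin d) := ⟨⟨0, hd⟩⟩
  set E : ℕ → Set (Rd d) := fun k => {y | (1 / 2) ^ (k + 1) * s < |dist x y - s| ∧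
    |dist x y - s| ≤ (1 / 2) ^ k * s ∧ s / 2 ≤ dist x y ∧ dist x y ≤ 2 * s} with hE
  have hm : ∀ k, MeasurableSet (E k) := by
    intro k
    have hd1 : Measurable (fun y : Rd d => dist x y) := by fun_prop
    have hd2 : Measurable (fun y : Rd d => |dist x y - s|) :=
      (continuous_abs.comp ((continuous_const.dist continuous_id).sub continuous_const)).measurable
    exact (measurableSet_lt measurable_const hd2).inter
      ((measurableSet_le hd2 measurable_const).inter
      ((measurableSet_le measurable_const hd1).inter (measurableSet_le hd1 measurable_const)))
  have hcov : ∀ᵐ y : Rd d, y ∉ ⋃ k, E k → psi x s y = 0 := by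
    have hsph : ∀ᵐ y : Rd d, y ∉ Metric.sphere x s := by
      exact measure_eq_zero_iff_ae_notMem.1 (Measure.addHaar_sphere volume x s)
    filter_upwards [hsph] with y hy hyE
    unfold psi
    rw [Set.indicator_of_notMem]
    rintro ⟨h1, h2⟩
    apply hyE
    have hne : 0 < |dist x y - s| := by
      rw [abs_pos, sub_ne_zero]
      intro h; apply hy; rw [Metric.mem_sphere, dist_comm]; exact h
    have hle : |dist x y - s| ≤ s := by rw [abs_le]; constructor <;> linarith
    have h3 : 1 ≤ s / |dist x y - s| := by rwa [le_div_iff₀ hne, one_mul]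
    obtain ⟨n, hn1, hn2⟩ := exists_nat_pow_near h3 (by norm_num : (1:ℝ) < 2)
    rw [le_div_iff₀ hne] at hn1
    rw [div_lt_iff₀ hne] at hn2
    rw [Set.mem_iUnion]
    refine ⟨n, ?_, ?_, h1, h2⟩
    · rw [one_div, inv_pow, inv_mul_eq_div, div_lt_iff₀ (by positivity)]; linarith
    · rw [one_div, inv_pow, inv_mul_eq_div, le_div_iff₀ (by positivity)]; linarith
  have h1 : ∫⁻ y, psi x s y ≤ ∫⁻ y in ⋃ k, E k, psi x s y := by
    rw [← lintegral_indicator (MeasurableSet.iUnion hm)]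
    apply lintegral_mono_ae
    filter_upwards [hcov] with y hy
    by_cases h : y ∈ ⋃ k, E k
    · rw [Set.indicator_of_mem h]
    · rw [hy h]; simp
  refine h1.trans ((lintegral_iUnion_le _ _).trans (ENNReal.tsum_le_tsum ?_))
  intro k
  set u : ℝ := (1 / 2) ^ k with hu
  have hu0 : 0 < u := by positivity
  have hu1 : u ≤ 1 := pow_le_one₀ (by norm_num) (by norm_num)
  have hvol : volume (E k) ≤ ENNReal.ofReal (s ^ d * (2 * d * 2 ^ d * u)) * kap d := by
    have hsub : E k ⊆ Metric.closedBall x (s + u * s) \ Metric.ball x (s - u * s) := by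
      rintro y ⟨_, h2, _, _⟩
      rw [abs_le] at h2
      constructor
      · rw [Metric.mem_closedBall, dist_comm]; linarith
      · rw [Metric.mem_ball, dist_comm]; linarith
    refine (measure_mono hsub).trans ?_
    have hus : u * s ≤ s := by nlinarith
    rw [measure_sdiff (by
      apply (Metric.ball_subset_closedBall).trans (Metric.closedBall_subset_closedBall _)
      have : 0 < u * s := by positivity
      linarith) measurableSet_ball.nullMeasurableSet measure_ball_lt_top.ne,
      vol_cball _ (by positivity), Measure.addHaar_ball _ _ (by linarith), finrank_euclideanSpace_fin]
    change _ - _ * kap d ≤ _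
    rw [← ENNReal.sub_mul (fun _ _ => kap_ne_top d), ← ENNReal.ofReal_sub _ (by
      have : 0 ≤ s - u * s := by linarith
      positivity)]
    gcongr
    have e1 : (s + u * s) ^ d = s ^ d * (1 + u) ^ d := by rw [← mul_pow]; ring
    have e2 : (s - u * s) ^ d = s ^ d * (1 - u) ^ d := by rw [← mul_pow]; ring
    rw [e1, e2, ← mul_sub]
    gcongr
    have h5 := (le_abs_self _).trans (abs_pow_sub_pow_le (1 + u) (1 - u) d)
    have h6 : |1 + u - (1 - u)| = 2 * u := by rw [show 1 + u - (1 - u) = 2 * u by ring, abs_of_pos (by positivity)]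
    have h7 : max |1 + u| |1 - u| ≤ 2 := by
      rw [abs_of_pos (by positivity), abs_of_nonneg (by linarith)]
      exact max_le (by linarith) (by linarith)
    rw [h6] at h5
    calc _ ≤ 2 * u * d * max |1 + u| |1 - u| ^ (d - 1) := h5
      _ ≤ 2 * u * d * 2 ^ (d - 1) := by gcongr
      _ ≤ 2 * u * d * 2 ^ d := by gcongr; norm_num; omega
      _ = _ := by ring
  have hptw : ∀ y ∈ E k, psi x s y ≤ ENNReal.ofReal (2 * 2 ^ d / s ^ d / √u) := by
    rintro y ⟨h1, h2, h3, h4⟩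
    unfold psi
    rw [Set.indicator_of_mem (show y ∈ {y | s / 2 ≤ dist x y ∧ dist x y ≤ 2 * s} from ⟨h3, h4⟩)]
    have hpos : 0 < |dist x y - s| := lt_trans (by positivity) h1
    rw [← ENNReal.ofReal_inv_of_pos (by positivity), ← ENNReal.ofReal_mul (by positivity)]
    apply ENNReal.ofReal_le_ofReal
    calc √(dist x y) / dist x y ^ d * (√|dist x y - s|)⁻¹
        ≤ √(2 * s) / (s / 2) ^ d * (√(u * s / 2))⁻¹ := by
          gcongr
          rw [pow_succ] at h1; linarith
      _ = _ := by
          rw [show u * s / 2 = (2 * s) * (u / 4) by ring,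
            Real.sqrt_mul (by positivity : 0 ≤ 2 * s) (u / 4),
            Real.sqrt_div' _ (by norm_num), show (4:ℝ) = 2 ^ 2 by norm_num, Real.sqrt_sq (by norm_num)]
          have : √(2 * s) ≠ 0 := by positivity
          have : √u ≠ 0 := by positivity
          rw [div_pow]
          field_simp
  calc ∫⁻ y in E k, psi x s y ≤ ∫⁻ y in E k, ENNReal.ofReal (2 * 2 ^ d / s ^ d / √u) :=
        setLIntegral_mono' (hm k) hptw
    _ = ENNReal.ofReal (2 * 2 ^ d / s ^ d / √u) * volume (E k) := setLIntegral_const _ _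
    _ ≤ ENNReal.ofReal (2 * 2 ^ d / s ^ d / √u) * (ENNReal.ofReal (s ^ d * (2 * d * 2 ^ d * u)) * kap d) := by gcongr
    _ = _ := by
        rw [← mul_assoc, ← mul_assoc (ENNReal.ofReal _), ← ENNReal.ofReal_mul (by positivity), ← ENNReal.ofReal_mul (by positivity)]
        congr 2
        rw [← sqrt_half_pow, ← hu]
        have h8 : √u ≠ 0 := by positivity
        have h9 : u = √u * √u := (Real.mul_self_sqrt hu0.le).symm
        have h10 : s ^ d ≠ 0 := by positivity
        have h11 : (4:ℝ) ^ d = 2 ^ d * 2 ^ d := by rw [← mul_pow]; norm_num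
        rw [h11]
        field_simp
        rw [Real.sq_sqrt hu0.le]; ring

/-! ### Basic properties of the variation -/

def ann {d : ℕ} (x : Rd d) (r s : ℝ) : Set (Rd d) := {y | r < dist x y ∧ dist x y ≤ s}

theorem meas_dist {d : ℕ} (x : Rd d) : Measurable (fun y : Rd d => dist x y) := by fun_prop

theorem meas_gt {d : ℕ} (x : Rd d) (r : ℝ) : MeasurableSet {y : Rd d | r < dist x y} :=
  measurableSet_lt measurable_const (meas_dist x)

theorem meas_ann {d : ℕ} (x : Rd d) (r s : ℝ) : MeasurableSet (ann x r s) :=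
  (meas_gt x r).inter (measurableSet_le (meas_dist x) measurable_const)

def SeqOK (ε : ℕ → ℝ) : Prop := StrictAnti ε ∧ (∀ i, 0 < ε i) ∧ Tendsto ε atTop (nhds 0)

theorem CZO.measKx {d : ℕ} (S : CZO d) (x : Rd d) : Measurable (S.K x) :=
  S.measK.comp (by fun_prop : Measurable fun y : Rd d => (x, y))

theorem CZO.K_int {d : ℕ} (S : CZO d) {h : Rd d → ℝ} (hh : Integrable h) (x : Rd d) {r : ℝ}
    (hr : 0 < r) : IntegrableOn (fun y => S.K x y * h y) {y | r < dist x y} := by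
  apply Integrable.bdd_mul (c := S.Cst / r ^ d) hh.integrableOn (S.measKx x).aestronglyMeasurable
  rw [ae_restrict_iff' (meas_gt x r)]
  refine Eventually.of_forall fun y hy => ?_
  have hy' : r < dist x y := hy
  have hne : x ≠ y := by rintro rfl; rw [dist_self] at hy'; linarith
  have := S.hCst
  refine (S.size x y hne).trans ?_
  gcongr

def CZO.D {d : ℕ} (S : CZO d) (h : Rd d → ℝ) (x : Rd d) (r s : ℝ) : ℝ :=
  ∫ y in ann x r s, S.K x y * h y

theorem CZO.trunc_sub {d : ℕ} (S : CZO d) {h : Rd d → ℝ} (hh : Integrable h) (x : Rd d) {r s : ℝ}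
    (hr : 0 < r) (hrs : r ≤ s) : S.trunc r h x - S.trunc s h x = S.D h x r s := by
  unfold CZO.trunc CZO.D
  rw [← setIntegral_sdiff (meas_gt x s) (S.K_int hh x hr) (fun y (hy : s < dist x y) => lt_of_le_of_lt hrs hy)]
  congr 2
  ext y
  simp [ann]

def lN (ρ : ℝ) (a : ℕ → ℝ≥0∞) : ℝ≥0∞ := (∑' i, a i ^ ρ) ^ (1 / ρ)

theorem lN_mono {ρ : ℝ} (hρ : 0 < ρ) {a b : ℕ → ℝ≥0∞} (h : ∀ i, a i ≤ b i) : lN ρ a ≤ lN ρ b := by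
  unfold lN
  gcongr with i
  exact h i

theorem lN_add {ρ : ℝ} (hρ : 1 ≤ ρ) (a b : ℕ → ℝ≥0∞) :
    lN ρ (fun i => a i + b i) ≤ lN ρ a + lN ρ b := by
  have := ENNReal.lintegral_Lp_add_le (μ := Measure.count) (f := a) (g := b)
    (measurable_of_countable _).aemeasurable (measurable_of_countable _).aemeasurable hρ
  simpa [lN, lintegral_count] using this

theorem lN_le_one {ρ : ℝ} (hρ : 1 ≤ ρ) (a : ℕ → ℝ≥0∞) : lN ρ a ≤ ∑' i, a i := by
  set A := ∑' i, a i with hA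
  by_cases hT : A = ∞
  · rw [hT]; exact le_top
  have hρ0 : 0 < ρ := by linarith
  unfold lN
  rw [one_div, ENNReal.rpow_inv_le_iff hρ0]
  have key : ∀ i, a i ^ ρ ≤ a i * A ^ (ρ - 1) := by
    intro i
    have hi : a i ≤ A := ENNReal.le_tsum i
    by_cases h0 : a i = 0
    · simp [h0, hρ0]
    calc a i ^ ρ = a i ^ (1 + (ρ - 1)) := by ring_nf
      _ = a i * a i ^ (ρ - 1) := by
          rw [ENNReal.rpow_add _ _ h0 (ne_top_of_le_ne_top hT hi), ENNReal.rpow_one]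
      _ ≤ _ := by gcongr
  refine (ENNReal.tsum_le_tsum key).trans ?_
  rw [ENNReal.tsum_mul_right, ← hA]
  by_cases h0 : A = 0
  · simp [h0]
  nth_rw 1 [← ENNReal.rpow_one A]
  rw [← ENNReal.rpow_add _ _ h0 hT]
  simp

theorem lN_le_two {ρ : ℝ} (hρ : 2 ≤ ρ) (a : ℕ → ℝ≥0∞) : lN ρ a ≤ (∑' i, a i ^ (2:ℝ)) ^ ((1:ℝ) / 2) := by
  have h := lN_le_one (ρ := ρ / 2) (by linarith) (fun i => a i ^ (2:ℝ))
  have h2 := ENNReal.rpow_le_rpow h (by norm_num : (0:ℝ) ≤ 1 / 2)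
  refine le_trans (le_of_eq ?_) h2
  unfold lN
  rw [← ENNReal.rpow_mul]
  congr 1
  · congr 1; funext i; rw [← ENNReal.rpow_mul]; congr 1; ring
  · field_simp

theorem CZO.var_eq {d : ℕ} (S : CZO d) (ρ : ℝ) {h : Rd d → ℝ} (hh : Integrable h) (x : Rd d) :
    S.var ρ h x = ⨆ (ε : ℕ → ℝ) (_ : SeqOK ε), lN ρ (fun i => ‖S.D h x (ε (i + 1)) (ε i)‖ₑ) := by
  unfold CZO.var
  refine iSup_congr fun ε => iSup_congr fun (hε : SeqOK ε) => ?_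
  unfold lN
  congr 2
  funext i
  have e := S.trunc_sub hh x (r := ε (i + 1)) (s := ε i) (hε.2.1 _) (hε.1 (Nat.lt_succ_self i)).le
  simp only
  rw [← e, Real.enorm_eq_ofReal_abs]

theorem CZO.var_le {d : ℕ} (S : CZO d) (ρ : ℝ) {h : Rd d → ℝ} (hh : Integrable h) (x : Rd d)
    (B : ℝ≥0∞) (hB : ∀ ε, SeqOK ε → lN ρ (fun i => ‖S.D h x (ε (i + 1)) (ε i)‖ₑ) ≤ B) :
    S.var ρ h x ≤ B := by
  rw [S.var_eq ρ hh]
  exact iSup₂_le hB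

theorem CZO.le_var {d : ℕ} (S : CZO d) (ρ : ℝ) {h : Rd d → ℝ} (hh : Integrable h) (x : Rd d)
    {ε : ℕ → ℝ} (hε : SeqOK ε) : lN ρ (fun i => ‖S.D h x (ε (i + 1)) (ε i)‖ₑ) ≤ S.var ρ h x := by
  rw [S.var_eq ρ hh]
  exact le_iSup₂ (f := fun (ε : ℕ → ℝ) (_ : SeqOK ε) =>
    lN ρ (fun i => ‖S.D h x (ε (i + 1)) (ε i)‖ₑ)) ε hε

theorem CZO.K_int_ann {d : ℕ} (S : CZO d) {h : Rd d → ℝ} (hh : Integrable h) (x : Rd d) {r : ℝ}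
    (hr : 0 < r) (s : ℝ) : IntegrableOn (fun y => S.K x y * h y) (ann x r s) :=
  (S.K_int hh x hr).mono_set fun _ hy => hy.1

theorem CZO.var_add_le {d : ℕ} (S : CZO d) {ρ : ℝ} (hρ : 1 ≤ ρ) {h₁ h₂ : Rd d → ℝ}
    (i₁ : Integrable h₁) (i₂ : Integrable h₂) (x : Rd d) :
    S.var ρ (fun y => h₁ y + h₂ y) x ≤ S.var ρ h₁ x + S.var ρ h₂ x := by
  apply S.var_le ρ (i₁.add i₂)
  intro ε hε
  calc _ ≤ lN ρ (fun i => ‖S.D h₁ x (ε (i + 1)) (ε i)‖ₑ + ‖S.D h₂ x (ε (i + 1)) (ε i)‖ₑ) := by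
        apply lN_mono (by linarith)
        intro i
        have : S.D (fun y => h₁ y + h₂ y) x (ε (i + 1)) (ε i) =
            S.D h₁ x (ε (i + 1)) (ε i) + S.D h₂ x (ε (i + 1)) (ε i) := by
          unfold CZO.D
          rw [← integral_add (S.K_int_ann i₁ x (hε.2.1 _) _) (S.K_int_ann i₂ x (hε.2.1 _) _)]
          simp_rw [mul_add]
        change ‖S.D (fun y => h₁ y + h₂ y) x (ε (i + 1)) (ε i)‖ₑ ≤ _
        rw [this]
        exact enorm_add_le _ _
    _ ≤ _ := lN_add hρ _ _
    _ ≤ _ := add_le_add (S.le_var ρ i₁ x hε) (S.le_var ρ i₂ x hε)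

theorem CZO.var_congr {d : ℕ} (S : CZO d) (ρ : ℝ) {h₁ h₂ : Rd d → ℝ} (h : h₁ =ᵐ[volume] h₂)
    (x : Rd d) : S.var ρ h₁ x = S.var ρ h₂ x := by
  have : ∀ r, S.trunc r h₁ x = S.trunc r h₂ x := by
    intro r
    unfold CZO.trunc
    apply integral_congr_ae
    filter_upwards [ae_restrict_of_ae h] with y hy
    rw [hy]
  unfold CZO.var
  simp_rw [this]

theorem ann_disj {d : ℕ} (x : Rd d) {ε : ℕ → ℝ} (hε : Antitone ε) :
    Pairwise (Function.onFun Disjoint fun i => ann x (ε (i + 1)) (ε i)) := by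
  intro i j hij
  rw [Function.onFun, Set.disjoint_left]
  rintro y ⟨h1, h2⟩ ⟨h3, h4⟩
  rcases lt_or_gt_of_ne hij with h | h
  · have := hε (Nat.succ_le_of_lt h); simp only [Nat.succ_eq_add_one] at this; linarith
  · have := hε (Nat.succ_le_of_lt h); simp only [Nat.succ_eq_add_one] at this; linarith

theorem CZO.var_le_l1 {d : ℕ} (S : CZO d) {ρ : ℝ} (hρ : 1 ≤ ρ) {h : Rd d → ℝ}
    (hh : Integrable h) (x : Rd d) :
    S.var ρ h x ≤ ∫⁻ y, ‖S.K x y * h y‖ₑ := by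
  apply S.var_le ρ hh
  intro ε hε
  refine (lN_le_one hρ _).trans ?_
  calc _ ≤ ∑' i, ∫⁻ y in ann x (ε (i + 1)) (ε i), ‖S.K x y * h y‖ₑ :=
        ENNReal.tsum_le_tsum fun i => enorm_integral_le_lintegral_enorm _
    _ = ∫⁻ y in ⋃ i, ann x (ε (i + 1)) (ε i), ‖S.K x y * h y‖ₑ :=
        (lintegral_iUnion (fun i => meas_ann _ _ _) (ann_disj x hε.1.antitone) _).symm
    _ ≤ _ := setLIntegral_le_lintegral _ _

theorem CZO.trunc_tendsto {d : ℕ} (S : CZO d) {h : Rd d → ℝ} (hh : Integrable h) (x : Rd d)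
    {t : ℝ} (ht : 0 < t) (s : ℕ → ℝ) (hs : ∀ n, t ≤ s n) (hl : Tendsto s atTop (nhds t)) :
    Tendsto (fun n => S.trunc (s n) h x) atTop (nhds (S.trunc t h x)) := by
  unfold CZO.trunc
  simp_rw [← integral_indicator (meas_gt x _)]
  have hKint := (integrable_indicator_iff (meas_gt x t)).2 (S.K_int hh x ht)
  refine tendsto_integral_of_dominated_convergence
    (bound := fun y => ‖{y : Rd d | t < dist x y}.indicator (fun y => S.K x y * h y) y‖)
    (fun n => ?_) hKint.norm (fun n => ?_) ?_
  · exact ((integrable_indicator_iff (meas_gt x _)).2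
      (S.K_int hh x (ht.trans_le (hs n)))).aestronglyMeasurable
  · refine Eventually.of_forall fun y => ?_
    apply norm_indicator_le_of_subset
    intro y (hy : s n < dist x y)
    exact lt_of_le_of_lt (hs n) hy
  · refine Eventually.of_forall fun y => ?_
    by_cases hy : t < dist x y
    · apply tendsto_const_nhds.congr'
      filter_upwards [hl.eventually (gt_mem_nhds hy)] with n hn
      rw [Set.indicator_of_mem (show y ∈ {y | t < dist x y} from hy),
        Set.indicator_of_mem (show y ∈ {y | s n < dist x y} from hn)]
    · apply tendsto_const_nhds.congr
      intro n
      rw [Set.indicator_of_notMem (show y ∉ {y | t < dist x y} from hy),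
        Set.indicator_of_notMem (show y ∉ {y | s n < dist x y} from fun h' => hy (lt_of_le_of_lt (hs n) h'))]

def CZO.psum {d : ℕ} (S : CZO d) (ρ : ℝ) (h : Rd d → ℝ) (x : Rd d) (ε : ℕ → ℝ) (N : ℕ) : ℝ≥0∞ :=
  (∑ i ∈ Finset.range N, ‖S.trunc (ε (i + 1)) h x - S.trunc (ε i) h x‖ₑ ^ ρ) ^ (1 / ρ)

theorem CZO.psum_le_strict {d : ℕ} (S : CZO d) {ρ : ℝ} (hρ : 0 < ρ) (h : Rd d → ℝ) (x : Rd d)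
    {ε : ℕ → ℝ} (h1 : StrictAnti ε) (h2 : ∀ i, 0 < ε i) (N : ℕ) :
    S.psum ρ h x ε N ≤ S.var ρ h x := by
  set e : ℕ → ℝ := fun i => if i ≤ N then ε i else ε N / 2 ^ (i - N) with he
  have hpos : ∀ i, 0 < e i := by
    intro i; simp only [he]; split_ifs
    · exact h2 i
    · have := h2 N; positivity
  have hOK : SeqOK e := by
    refine ⟨strictAnti_nat_of_succ_lt fun n => ?_, hpos, ?_⟩
    · simp only [he]
      rcases lt_trichotomy n N with hn | hn | hn
      · rw [if_pos hn.le, if_pos (Nat.succ_le_of_lt hn)]; exact h1 (Nat.lt_succ_self n)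
      · subst hn
        rw [if_pos le_rfl, if_neg (by omega)]
        have := h2 n
        simp; linarith
      · rw [if_neg (by omega), if_neg (by omega)]
        have := h2 N
        rw [show n + 1 - N = (n - N) + 1 by omega, pow_succ]
        apply div_lt_div_of_pos_left this (by positivity)
        have : (0:ℝ) < 2 ^ (n - N) := by positivity
        linarith
    · have h3 : Tendsto (fun i : ℕ => ε N * (1 / 2 : ℝ) ^ (i - N)) atTop (nhds (ε N * 0)) :=
        ((tendsto_pow_atTop_nhds_zero_of_lt_one (by norm_num) (by norm_num)).comp
          (tendsto_sub_atTop_nat N)).const_mul _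
      rw [mul_zero] at h3
      apply h3.congr'
      filter_upwards [eventually_gt_atTop N] with i hi
      simp only [he]
      rw [if_neg (by omega), one_div, inv_pow, div_eq_mul_inv]
  have h4 : (∑' i : ℕ, ENNReal.ofReal |S.trunc (e (i + 1)) h x - S.trunc (e i) h x| ^ ρ) ^ (1 / ρ)
      ≤ S.var ρ h x := by
    unfold CZO.var
    exact le_iSup₂ (f := fun (ε : ℕ → ℝ) (_ : StrictAnti ε ∧ (∀ i, 0 < ε i) ∧ Tendsto ε atTop (nhds 0)) =>
      (∑' i : ℕ, ENNReal.ofReal |S.trunc (ε (i + 1)) h x - S.trunc (ε i) h x| ^ ρ) ^ (1 / ρ)) e hOK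
  refine le_trans ?_ h4
  unfold CZO.psum
  gcongr
  calc _ = ∑ i ∈ Finset.range N, ENNReal.ofReal |S.trunc (e (i + 1)) h x - S.trunc (e i) h x| ^ ρ := by
        apply Finset.sum_congr rfl
        intro i hi
        rw [Finset.mem_range] at hi
        simp only [he]
        rw [if_pos (by omega), if_pos (by omega), Real.enorm_eq_ofReal_abs]
    _ ≤ _ := ENNReal.sum_le_tsum _

theorem CZO.psum_tendsto {d : ℕ} (S : CZO d) {ρ : ℝ} (hρ : 0 < ρ) {h : Rd d → ℝ} (hh : Integrable h)
    (x : Rd d) {ε : ℕ → ℝ} (h2 : ∀ i, 0 < ε i) (δ : ℕ → ℕ → ℝ) (h3 : ∀ n i, ε i ≤ δ n i)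
    (h4 : ∀ i, Tendsto (fun n => δ n i) atTop (nhds (ε i))) (N : ℕ) :
    Tendsto (fun n => S.psum ρ h x (δ n) N) atTop (nhds (S.psum ρ h x ε N)) := by
  have ht : ∀ i, Tendsto (fun n => S.trunc (δ n i) h x) atTop (nhds (S.trunc (ε i) h x)) :=
    fun i => S.trunc_tendsto hh x (h2 i) _ (fun n => h3 n i) (h4 i)
  unfold CZO.psum
  apply (ENNReal.continuous_rpow_const.tendsto _).comp
  apply tendsto_finsetSum
  intro i _
  exact (ENNReal.continuous_rpow_const.tendsto _).comp
    ((continuous_enorm.tendsto _).comp ((ht (i + 1)).sub (ht i)))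

theorem CZO.psum_le {d : ℕ} (S : CZO d) {ρ : ℝ} (hρ : 0 < ρ) {h : Rd d → ℝ} (hh : Integrable h)
    (x : Rd d) {ε : ℕ → ℝ} (h1 : Antitone ε) (h2 : ∀ i, 0 < ε i) (N : ℕ) :
    S.psum ρ h x ε N ≤ S.var ρ h x := by
  have hT := S.psum_tendsto hρ hh x h2 (fun n i => ε i + 1 / ((n : ℝ) + 1) * (1 / ((i : ℝ) + 1)))
    (fun n i => by
      have : 0 < 1 / ((n : ℝ) + 1) * (1 / ((i : ℝ) + 1)) := by positivity
      linarith) (fun i => by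
      have := ((tendsto_one_div_add_atTop_nhds_zero_nat (𝕜 := ℝ)).mul_const (1 / ((i : ℝ) + 1))).const_add (ε i)
      simpa using this) N
  refine le_of_tendsto' hT fun n => S.psum_le_strict hρ h x ?_ ?_ N
  · intro i j hij
    have e1 := h1 hij.le
    have e2 : 1 / ((j : ℝ) + 1) < 1 / ((i : ℝ) + 1) := by
      have : (i : ℝ) < j := by exact_mod_cast hij
      gcongr
    have e3 : 0 < 1 / ((n : ℝ) + 1) := by positivity
    have := mul_lt_mul_of_pos_left e2 e3
    simp only
    linarith
  · intro i
    have := h2 i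
    positivity

theorem lN_le_of_range {ρ : ℝ} (hρ : 0 < ρ) (a : ℕ → ℝ≥0∞) (B : ℝ≥0∞)
    (h : ∀ N, (∑ i ∈ Finset.range N, a i ^ ρ) ^ (1 / ρ) ≤ B) : lN ρ a ≤ B := by
  unfold lN
  rw [one_div, ENNReal.rpow_inv_le_iff hρ]
  apply ENNReal.tsum_le_of_sum_range_le
  intro N
  have := h N
  rwa [one_div, ENNReal.rpow_inv_le_iff hρ] at this

/-- truncating the function to the complement of a ball decreases the variation -/
theorem CZO.var_trunc_le {d : ℕ} (S : CZO d) {ρ : ℝ} (hρ : 0 < ρ) {h : Rd d → ℝ} (hh : Integrable h)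
    (x : Rd d) (R : ℝ) :
    S.var ρ ({y | R < dist x y}.indicator h) x ≤ S.var ρ h x := by
  have key : ∀ r, S.trunc r ({y | R < dist x y}.indicator h) x = S.trunc (max r R) h x := by
    intro r
    unfold CZO.trunc
    rw [← integral_indicator (meas_gt x _), ← integral_indicator (meas_gt x _)]
    congr 1
    funext y
    simp only [Set.indicator, Set.mem_ofPred_eq, max_lt_iff]
    by_cases h1 : r < dist x y <;> by_cases h2 : R < dist x y <;> simp [h1, h2]
  set B := S.var ρ h x with hB
  unfold CZO.var
  refine iSup₂_le fun ε hε => ?_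
  change lN ρ _ ≤ _
  apply lN_le_of_range hρ
  intro N
  have := S.psum_le hρ hh x (ε := fun i => max (ε i) R) (fun i j hij => max_le_max (hε.1.antitone hij) le_rfl)
    (fun i => lt_max_of_lt_left (hε.2.1 i)) N
  unfold CZO.psum at this
  simp_rw [key, ← Real.enorm_eq_ofReal_abs]
  exact this

theorem CZO.meas_trunc {d : ℕ} (S : CZO d) {h : Rd d → ℝ} (hm : Measurable h) (r : ℝ) :
    Measurable (fun x => S.trunc r h x) := by
  unfold CZO.trunc
  simp_rw [← integral_indicator (meas_gt _ r)]
  have h1 : Measurable (fun p : Rd d × Rd d => Set.indicator {p : Rd d × Rd d | r < dist p.1 p.2}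
      (fun p => S.K p.1 p.2 * h p.2) p) := by
    apply Measurable.indicator
    · exact S.measK.mul (hm.comp measurable_snd)
    · exact measurableSet_lt measurable_const (by fun_prop)
  have h2 := (h1.stronglyMeasurable.integral_prod_right' (ν := (volume : Measure (Rd d)))).measurable
  exact h2

theorem CZO.exists_meas_var {d : ℕ} (S : CZO d) {ρ : ℝ} (hρ : 0 < ρ) {h : Rd d → ℝ} (hm : Measurable h)
    (hh : Integrable h) : Measurable (S.var ρ h) := by
  set V : Rd d → ℝ≥0∞ := fun x => ⨆ (N : ℕ), ⨆ (j : {j : Fin (N + 1) → ℚ // Antitone j ∧ ∀ i, 0 < j i}),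
    (∑ i : Fin N, ‖S.trunc (j.1 i.succ) h x - S.trunc (j.1 i.castSucc) h x‖ₑ ^ ρ) ^ (1 / ρ) with hV
  have hmV : Measurable V := by
    apply Measurable.iSup; intro N
    apply Measurable.iSup; intro j
    apply Measurable.pow_const
    apply Finset.measurable_fun_sum
    intro i _
    apply Measurable.pow_const
    exact ((S.meas_trunc hm _).sub (S.meas_trunc hm _)).enorm
  suffices hVe : S.var ρ h = V by rw [hVe]; exact hmV
  funext x
  apply le_antisymm
  · unfold CZO.var
    refine iSup₂_le fun ε hε => ?_
    change lN ρ _ ≤ _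
    apply lN_le_of_range hρ
    intro N
    simp_rw [← Real.enorm_eq_ofReal_abs]
    change S.psum ρ h x ε N ≤ _
    set q : ℕ → ℝ → ℚ := fun n t => ((⌊t * ((n:ℝ) + 1)⌋₊ : ℚ) + 1) / ((n : ℚ) + 1) with hq
    have hqc : ∀ n t, ((q n t : ℚ) : ℝ) = ((⌊t * ((n:ℝ) + 1)⌋₊ : ℝ) + 1) / ((n : ℝ) + 1) := by
      intro n t; simp only [hq]; push_cast; rfl
    have hq1 : ∀ n t, t ≤ q n t := by
      intro n t
      rw [hqc, le_div_iff₀ (by positivity)]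
      exact (Nat.lt_floor_add_one _).le
    have hq2 : ∀ n t, 0 < t → (q n t : ℝ) ≤ t + 1 / ((n:ℝ) + 1) := by
      intro n t ht
      rw [hqc, add_div]
      gcongr
      rw [div_le_iff₀ (by positivity)]
      exact Nat.floor_le (by positivity)
    have hT := S.psum_tendsto hρ hh x hε.2.1 (fun n i => (q n (ε i) : ℝ)) (fun n i => hq1 n _)
      (fun i => by
        refine tendsto_of_tendsto_of_tendsto_of_le_of_le tendsto_const_nhds ?_ (fun n => hq1 n (ε i))
          (fun n => hq2 n (ε i) (hε.2.1 i))
        simpa using (tendsto_one_div_add_atTop_nhds_zero_nat (𝕜 := ℝ)).const_add (ε i)) N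
    refine le_of_tendsto' hT fun n => ?_
    refine le_trans ?_ (le_iSup _ N)
    refine le_trans (le_of_eq ?_) (le_iSup _ ⟨fun i : Fin (N + 1) => q n (ε i), ?_, ?_⟩)
    · unfold CZO.psum
      rw [Finset.sum_range]
      simp
    · intro i j hij
      simp only [hq]
      have : ε j ≤ ε i := hε.1.antitone hij
      gcongr
    · intro i; simp only [hq]; positivity
  · refine iSup_le fun N => iSup_le fun j => ?_
    have := S.psum_le hρ hh x (ε := fun i => (j.1 ⟨min i N, by omega⟩ : ℝ)) (fun a b hab => by
        have : j.1 ⟨min b N, by omega⟩ ≤ j.1 ⟨min a N, by omega⟩ := j.2.1 (by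
          rw [Fin.mk_le_mk]; omega)
        simp only
        exact_mod_cast this) (fun i => by exact_mod_cast j.2.2 _) N
    refine le_trans (le_of_eq ?_) this
    unfold CZO.psum
    rw [Finset.sum_range]
    congr 1
    apply Finset.sum_congr rfl
    intro i _
    have e1 : (⟨min (i.1 + 1) N, by omega⟩ : Fin (N + 1)) = i.succ := by
      ext; simp
    have e2 : (⟨min i.1 N, by omega⟩ : Fin (N + 1)) = i.castSucc := by
      ext; simp
    simp only [e1, e2]

/-! ### Boundary lemma -/

theorem cs_bound {α : Type*} [MeasurableSpace α] (μ : Measure α) (m w : α → ℝ≥0∞)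
    (hm : Measurable m) (hw : Measurable w) (hmw : ∀ y, m y ≠ 0 → w y ≠ 0 ∧ w y ≠ ∞) :
    (∫⁻ y, m y ∂μ) ^ (2:ℝ) ≤ (∫⁻ y, m y * w y ∂μ) * ∫⁻ y, m y * (w y)⁻¹ ∂μ := by
  have h := ENNReal.lintegral_mul_le_Lp_mul_Lq μ Real.HolderConjugate.two_two
    (f := fun y => (m y * w y) ^ ((1:ℝ)/2)) (g := fun y => (m y * (w y)⁻¹) ^ ((1:ℝ)/2))
    ((hm.mul hw).pow_const _).aemeasurable ((hm.mul hw.inv).pow_const _).aemeasurable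
  have e1 : ∀ t : ℝ≥0∞, (t ^ ((1:ℝ)/2)) ^ (2:ℝ) = t := by
    intro t; rw [← ENNReal.rpow_mul]; norm_num
  have e2 : ∀ y, ((fun y => (m y * w y) ^ ((1:ℝ)/2)) * (fun y => (m y * (w y)⁻¹) ^ ((1:ℝ)/2))) y = m y := by
    intro y
    simp only [Pi.mul_apply]
    rw [← ENNReal.mul_rpow_of_nonneg _ _ (by norm_num)]
    by_cases h0 : m y = 0
    · simp [h0]
    obtain ⟨h1, h2⟩ := hmw y h0
    rw [show m y * w y * (m y * (w y)⁻¹) = (m y * m y) * (w y * (w y)⁻¹) by ring,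
      ENNReal.mul_inv_cancel h1 h2, mul_one, ENNReal.mul_rpow_of_nonneg _ _ (by norm_num)]
    have := e1 (m y)
    rw [ENNReal.rpow_two, sq] at this
    exact this
  simp_rw [e2, e1] at h
  calc _ ≤ _ := ENNReal.rpow_le_rpow h (by norm_num)
    _ = _ := by rw [ENNReal.mul_rpow_of_nonneg _ _ (by norm_num), e1, e1]

theorem boundary_l2 {d : ℕ} (m w : Rd d → ℝ≥0∞)
    (hm : Measurable m) (hw : Measurable w) (hmw : ∀ y, m y ≠ 0 → w y ≠ 0 ∧ w y ≠ ∞)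
    (B : ℕ → Set (Rd d)) (hB : ∀ i, MeasurableSet (B i)) (hd : Pairwise (Function.onFun Disjoint B))
    (C : ℝ≥0∞) (hC : ∀ i, ∫⁻ y in B i, m y * w y ≤ C) :
    ∑' i, (∫⁻ y in B i, m y) ^ (2:ℝ) ≤ C * ∫⁻ y, m y * (w y)⁻¹ := by
  calc _ ≤ ∑' i, C * ∫⁻ y in B i, m y * (w y)⁻¹ := ENNReal.tsum_le_tsum fun i =>
        (cs_bound _ m w hm hw hmw).trans (by gcongr; exact hC i)
    _ = C * ∫⁻ y in ⋃ i, B i, m y * (w y)⁻¹ := by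
        rw [ENNReal.tsum_mul_left, lintegral_iUnion hB hd]
    _ ≤ _ := mul_le_mul_right (setLIntegral_le_lintegral _ _) _

theorem lN_boundary {ρ : ℝ} (hρ : 2 ≤ ρ) {d : ℕ} (m w : Rd d → ℝ≥0∞)
    (hm : Measurable m) (hw : Measurable w) (hmw : ∀ y, m y ≠ 0 → w y ≠ 0 ∧ w y ≠ ∞)
    (B : ℕ → Set (Rd d)) (hB : ∀ i, MeasurableSet (B i)) (hd : Pairwise (Function.onFun Disjoint B))
    (C : ℝ≥0∞) (hC : ∀ i, ∫⁻ y in B i, m y * w y ≤ C) :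
    lN ρ (fun i => ∫⁻ y in B i, m y) ≤ (C * ∫⁻ y, m y * (w y)⁻¹) ^ ((1:ℝ)/2) :=
  (lN_le_two hρ _).trans (ENNReal.rpow_le_rpow (boundary_l2 m w hm hw hmw B hB hd C hC) (by norm_num))

/-! ### Shifting the base point -/

theorem CZO.K_int_far {d : ℕ} (S : CZO d) {h : Rd d → ℝ} (hh : Integrable h) (x : Rd d) {r : ℝ}
    (hr : 0 < r) (h0 : ∀ y, dist x y ≤ r → h y = 0) : Integrable (fun y => S.K x y * h y) := by
  have h1 := (integrable_indicator_iff (meas_gt x r)).2 (S.K_int hh x hr)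
  refine h1.congr (Eventually.of_forall fun y => ?_)
  simp only
  by_cases hy : r < dist x y
  · rw [Set.indicator_of_mem (show y ∈ {y | r < dist x y} from hy)]
  · rw [Set.indicator_of_notMem (show y ∉ {y | r < dist x y} from hy), h0 y (not_lt.1 hy), mul_zero]

theorem psi_lower {d : ℕ} (x : Rd d) (s : ℝ) (y : Rd d) (R : ℝ) (hR : 0 < R)
    (h1 : |dist x y - s| ≤ R) (h2 : s / 2 ≤ dist x y) (h3 : dist x y ≤ 2 * s) :
    ENNReal.ofReal (√(dist x y / R) / dist x y ^ d) ≤ psi x s y := by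
  unfold psi
  rw [Set.indicator_of_mem (show y ∈ {y | s / 2 ≤ dist x y ∧ dist x y ≤ 2 * s} from ⟨h2, h3⟩)]
  have e : √(dist x y / R) / dist x y ^ d = (√(dist x y) / dist x y ^ d) * (√R)⁻¹ := by
    rw [Real.sqrt_div' _ hR.le]; ring
  rw [e, ENNReal.ofReal_mul (by positivity), ENNReal.ofReal_inv_of_pos (by positivity)]
  gcongr

theorem psi_meas {d : ℕ} (x : Rd d) (s : ℝ) : Measurable (psi x s) := by
  unfold psi
  apply Measurable.indicator
  · apply Measurable.mul
    · apply Measurable.ennreal_ofReal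
      fun_prop
    · apply Measurable.inv
      apply Measurable.ennreal_ofReal
      fun_prop
  · exact (measurableSet_le measurable_const (meas_dist x)).inter
      (measurableSet_le (meas_dist x) measurable_const)

theorem CZO.size' {d : ℕ} (S : CZO d) (x y : Rd d) (h : 0 < dist x y) :
    |S.K x y| ≤ S.Cst / dist x y ^ d := S.size x y (dist_pos.1 h)

theorem half_sq (M : ℝ) (K : ℝ≥0∞) :
    (ENNReal.ofReal M ^ (2:ℝ) * K) ^ ((1:ℝ)/2) = ENNReal.ofReal M * K ^ ((1:ℝ)/2) := by
  rw [ENNReal.mul_rpow_of_nonneg _ _ (by norm_num), ← ENNReal.rpow_mul]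
  norm_num

theorem lN_add3 {ρ : ℝ} (hρ : 1 ≤ ρ) (a b c e : ℕ → ℝ≥0∞) :
    lN ρ (fun i => a i + b i + c i + e i) ≤ lN ρ a + lN ρ b + lN ρ c + lN ρ e := by
  refine (lN_add hρ (fun i => a i + b i + c i) e).trans ?_
  gcongr
  refine (lN_add hρ (fun i => a i + b i) c).trans ?_
  gcongr
  exact lN_add hρ a b

theorem good_shift {d : ℕ} (hd : 0 < d) (S : CZO d) {ρ : ℝ} (hρ : 2 ≤ ρ) :
    ∃ C : ℝ≥0∞, C ≠ ∞ ∧ ∀ (g : Rd d → ℝ) (M : ℝ) (x x' : Rd d) (R : ℝ), Measurable g → Integrable g →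
      0 ≤ M → (∀ y, |g y| ≤ M) → 0 < R → dist x x' ≤ R / 50 →
      S.var ρ ({y | R < dist x y}.indicator g) x ≤ S.var ρ g x' + C * ENNReal.ofReal M := by
  obtain ⟨Cφ, hCφ, hφ⟩ := S.phi_integral
  obtain ⟨Cψ, hCψ, hψ⟩ := psi_integral d hd
  have hC0 := S.hCst
  set K2 : ℝ≥0∞ := (ENNReal.ofReal S.Cst * (2 * Cψ)) * (ENNReal.ofReal (2 * S.Cst) * Cφ) with hK2
  have hK2t : K2 ^ ((1:ℝ)/2) ≠ ∞ := by
    apply ENNReal.rpow_ne_top_of_nonneg (by norm_num)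
    simp only [hK2]
    finiteness
  refine ⟨ENNReal.ofReal S.Cst * Cφ + K2 ^ ((1:ℝ)/2) + K2 ^ ((1:ℝ)/2) + ENNReal.ofReal (S.Cst * 4 ^ d) * kap d,
    ?_, ?_⟩
  · have := kap_ne_top d
    finiteness
  intro g M x x' R hgm hg hM hgM hR hxx
  set h : Rd d → ℝ := {y | R < dist x y}.indicator g with hh
  have hhi : Integrable h := hg.indicator (meas_gt x R)
  have hhm : Measurable h := hgm.indicator (meas_gt x R)
  have hh0 : ∀ y, dist x y ≤ R → h y = 0 := fun y hy =>
    Set.indicator_of_notMem (show y ∉ {y | R < dist x y} from not_lt.2 hy) _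
  have hhM : ∀ y, |h y| ≤ M := by
    intro y
    by_cases hy : R < dist x y
    · rw [hh, Set.indicator_of_mem (show y ∈ {y | R < dist x y} from hy)]; exact hgM y
    · rw [hh0 y (not_lt.1 hy)]; simpa using hM
  have hh0' : ∀ y, dist x' y ≤ R / 2 → h y = 0 := fun y hy => hh0 y (by
    have := dist_triangle x x' y
    linarith)
  have I1 := S.K_int_far hhi x hR hh0
  have I2 := S.K_int_far hhi x' (by positivity : 0 < R / 2) hh0'
  -- step 1: compare the variations of `h` at the two points
  have step1 : S.var ρ h x ≤ S.var ρ h x' + (ENNReal.ofReal S.Cst * Cφ + K2 ^ ((1:ℝ)/2) + K2 ^ ((1:ℝ)/2)) * ENNReal.ofReal M := by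
    apply S.var_le ρ hhi
    intro ε hε
    set A : ℕ → Set (Rd d) := fun i => ann x (ε (i + 1)) (ε i) with hA
    set A' : ℕ → Set (Rd d) := fun i => ann x' (ε (i + 1)) (ε i) with hA'
    set m : Rd d → ℝ≥0∞ := fun y => ‖S.K x' y * h y‖ₑ with hm
    have hmm : Measurable m := ((S.measKx x').mul hhm).enorm
    set w : Rd d → ℝ≥0∞ := fun y => ENNReal.ofReal √(dist x' y / R) with hw
    have hwm : Measurable w := by
      apply Measurable.ennreal_ofReal
      fun_prop
    have hpos : ∀ y, h y ≠ 0 → R / 2 < dist x' y ∧ R < dist x y := fun y hy =>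
      ⟨by by_contra hc; exact hy (hh0' y (not_lt.1 hc)), by by_contra hc; exact hy (hh0 y (not_lt.1 hc))⟩
    have hmw : ∀ y, m y ≠ 0 → w y ≠ 0 ∧ w y ≠ ∞ := by
      intro y hy
      have hy' : h y ≠ 0 := by
        rintro h0; apply hy; simp [hm, h0]
      have := (hpos y hy').1
      refine ⟨?_, ENNReal.ofReal_ne_top⟩
      simp only [hw]
      rw [ne_eq, ENNReal.ofReal_eq_zero, not_le, Real.sqrt_pos]
      have : 0 < dist x' y := by linarith
      positivity
    have hmle : ∀ y, h y ≠ 0 → m y ≤ ENNReal.ofReal (S.Cst * M / dist x' y ^ d) := by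
      intro y hy
      have h1 := (hpos y hy).1
      have h2 := S.size' x' y (by linarith)
      simp only [hm]
      rw [Real.enorm_eq_ofReal_abs, abs_mul]
      apply ENNReal.ofReal_le_ofReal
      calc _ ≤ S.Cst / dist x' y ^ d * M := mul_le_mul h2 (hhM y) (abs_nonneg _) (by positivity)
        _ = _ := by ring
    have hdecomp : ∀ i, ‖S.D h x (ε (i + 1)) (ε i)‖ₑ ≤ ‖S.D h x' (ε (i + 1)) (ε i)‖ₑ +
        (∫⁻ y in A i, ‖(S.K x y - S.K x' y) * h y‖ₑ) + (∫⁻ y in A i \ A' i, m y) + ∫⁻ y in A' i \ A i, m y := by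
      intro i
      have e1 : S.D h x (ε (i + 1)) (ε i) = S.D h x' (ε (i + 1)) (ε i) +
          (∫ y in A i, (S.K x y - S.K x' y) * h y) + (∫ y in A i \ A' i, S.K x' y * h y)
          - ∫ y in A' i \ A i, S.K x' y * h y := by
        have f1 : ∫ y in A i, (S.K x y - S.K x' y) * h y =
            (∫ y in A i, S.K x y * h y) - ∫ y in A i, S.K x' y * h y := by
          rw [← integral_sub I1.integrableOn I2.integrableOn]
          simp_rw [sub_mul]
        have f2 := integral_inter_add_sdiff (s := A i) (meas_ann x' (ε (i+1)) (ε i)) I2.integrableOn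
        have f3 := integral_inter_add_sdiff (s := A' i) (meas_ann x (ε (i+1)) (ε i)) I2.integrableOn
        rw [Set.inter_comm] at f3
        change (∫ y in A i, S.K x y * h y) = (∫ y in A' i, S.K x' y * h y) + _ + _ - _
        rw [f1]
        simp only [hA, hA'] at f2 f3 ⊢
        linarith
      rw [e1]
      refine (enorm_sub_le).trans ?_
      refine add_le_add ?_ (enorm_integral_le_lintegral_enorm _)
      refine (enorm_add_le _ _).trans ?_
      refine add_le_add ?_ (enorm_integral_le_lintegral_enorm _)
      refine (enorm_add_le _ _).trans ?_
      exact add_le_add le_rfl (enorm_integral_le_lintegral_enorm _)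
    have hu : lN ρ (fun i => ∫⁻ y in A i, ‖(S.K x y - S.K x' y) * h y‖ₑ) ≤
        ENNReal.ofReal M * (ENNReal.ofReal S.Cst * Cφ) := by
      refine (lN_le_one (by linarith) _).trans ?_
      rw [← lintegral_iUnion (fun i => meas_ann _ _ _) (ann_disj x hε.1.antitone)]
      refine (setLIntegral_le_lintegral _ _).trans ?_
      calc _ ≤ ∫⁻ y, {y | R ≤ dist x y}.indicator (fun y => (ENNReal.ofReal M * ENNReal.ofReal S.Cst) *
            ENNReal.ofReal (S.phi (R / dist x y) / dist x y ^ d)) y := by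
            apply lintegral_mono
            intro y
            simp only
            by_cases hy : h y = 0
            · simp [hy]
            have h1 := (hpos y hy).2
            rw [Set.indicator_of_mem (show y ∈ {y | R ≤ dist x y} from h1.le),
              Real.enorm_eq_ofReal_abs, abs_mul, ← ENNReal.ofReal_mul hM, ← ENNReal.ofReal_mul (by positivity)]
            apply ENNReal.ofReal_le_ofReal
            have hdp : 0 < dist x y := by linarith
            have h2 := S.smooth x x' y (dist_pos.1 hdp) (by linarith)
            have h3 : S.ω (dist x x' / dist x y) ≤ S.phi (R / dist x y) :=
              (S.ω_le_phi (by positivity)).trans (S.phi_mono (by gcongr; linarith))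
            have h4 : |S.K x y - S.K x' y| ≤ S.Cst * S.phi (R / dist x y) / dist x y ^ d := by
              have := abs_nonneg (S.K y x - S.K y x')
              have : S.Cst * S.ω (dist x x' / dist x y) / dist x y ^ d ≤ S.Cst * S.phi (R / dist x y) / dist x y ^ d := by
                gcongr
              linarith
            have hp := S.phi_nonneg (R / dist x y)
            calc _ ≤ (S.Cst * S.phi (R / dist x y) / dist x y ^ d) * M :=
                  mul_le_mul h4 (hhM y) (abs_nonneg _) (by positivity)
              _ = _ := by ring
        _ = (ENNReal.ofReal M * ENNReal.ofReal S.Cst) * ∫⁻ y in {y | R ≤ dist x y},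
            ENNReal.ofReal (S.phi (R / dist x y) / dist x y ^ d) := by
            rw [lintegral_indicator (measurableSet_le measurable_const (meas_dist x)),
              lintegral_const_mul' _ _ (by finiteness)]
        _ ≤ _ := by
            rw [mul_assoc]
            gcongr
            exact hφ x R hR
    have hminv : ∫⁻ y, m y * (w y)⁻¹ ≤ ENNReal.ofReal M * (ENNReal.ofReal (2 * S.Cst) * Cφ) := by
      calc _ ≤ ∫⁻ y, {y | R / 2 ≤ dist x' y}.indicator (fun y => (ENNReal.ofReal M * ENNReal.ofReal (2 * S.Cst)) *
            ENNReal.ofReal (S.phi ((R / 2) / dist x' y) / dist x' y ^ d)) y := by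
            apply lintegral_mono
            intro y
            simp only
            by_cases hy : h y = 0
            · simp [hy, hm]
            have h1 := (hpos y hy).1
            have hdp : 0 < dist x' y := by linarith
            have h2 := hmle y hy
            rw [Set.indicator_of_mem (show y ∈ {y | R / 2 ≤ dist x' y} from h1.le),
              ← ENNReal.ofReal_mul hM, ← ENNReal.ofReal_mul (by positivity)]
            simp only [hw]
            rw [← ENNReal.ofReal_inv_of_pos (by positivity)]
            calc _ ≤ ENNReal.ofReal (S.Cst * M / dist x' y ^ d) * ENNReal.ofReal (√(dist x' y / R))⁻¹ := by gcongr
              _ = ENNReal.ofReal (S.Cst * M / dist x' y ^ d * (√(dist x' y / R))⁻¹) := by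
                  rw [ENNReal.ofReal_mul (by positivity)]
              _ ≤ _ := by
                  apply ENNReal.ofReal_le_ofReal
                  have e1 : (√(dist x' y / R))⁻¹ ≤ 2 * S.phi (R / 2 / dist x' y) := by
                    refine le_trans ?_ (S.phi_two (by positivity))
                    refine le_trans (le_of_eq ?_) (S.sqrt_le_phi _)
                    rw [← Real.sqrt_inv]
                    congr 1
                    field_simp
                  calc _ ≤ S.Cst * M / dist x' y ^ d * (2 * S.phi (R / 2 / dist x' y)) := by gcongr
                    _ = _ := by ring
        _ = (ENNReal.ofReal M * ENNReal.ofReal (2 * S.Cst)) * ∫⁻ y in {y | R / 2 ≤ dist x' y},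
            ENNReal.ofReal (S.phi ((R / 2) / dist x' y) / dist x' y ^ d) := by
            rw [lintegral_indicator (measurableSet_le measurable_const (meas_dist x')),
              lintegral_const_mul' _ _ (by finiteness)]
        _ ≤ _ := by
            rw [mul_assoc]
            gcongr
            exact hφ x' (R / 2) (by positivity)
    have hmwB : ∀ i (B : Set (Rd d)), MeasurableSet B → (∀ y ∈ B, (y ∈ A i ∧ y ∉ A' i) ∨ (y ∈ A' i ∧ y ∉ A i)) →
        ∫⁻ y in B, m y * w y ≤ ENNReal.ofReal M * (ENNReal.ofReal S.Cst * (2 * Cψ)) := by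
      intro i B hBm hB
      calc _ ≤ ∫⁻ y in B, (ENNReal.ofReal M * ENNReal.ofReal S.Cst) * (psi x' (ε (i + 1)) y + psi x' (ε i) y) := by
            apply setLIntegral_mono' hBm
            intro y hy
            by_cases hy0 : h y = 0
            · simp [hy0, hm]
            have h1 := (hpos y hy0).1
            have h2 := (hpos y hy0).2
            have hdp : 0 < dist x' y := by linarith
            have hlow : ENNReal.ofReal (√(dist x' y / R) / dist x' y ^ d) ≤
                psi x' (ε (i + 1)) y + psi x' (ε i) y := by
              have t1 := dist_triangle x x' y
              have t2 := dist_triangle x' x y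
              rw [dist_comm x' x] at t2
              have hs : |dist x' y - ε (i + 1)| ≤ R / 50 ∨ |dist x' y - ε i| ≤ R / 50 := by
                have hBy := hB y hy
                simp only [hA, hA', ann, Set.mem_ofPred_eq, not_and_or, not_lt, not_le] at hBy
                rcases hBy with ⟨⟨a1, a2⟩, a3 | a3⟩ | ⟨⟨a1, a2⟩, a3 | a3⟩
                · left; rw [abs_le]; constructor <;> linarith
                · right; rw [abs_le]; constructor <;> linarith
                · left; rw [abs_le]; constructor <;> linarith
                · right; rw [abs_le]; constructor <;> linarith
              rcases hs with hs | hs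
              · refine le_trans (psi_lower _ _ _ R hR (by linarith) ?_ ?_) le_self_add
                · have := (abs_le.1 hs).1; linarith
                · have := (abs_le.1 hs).2; linarith
              · refine le_trans (psi_lower _ _ _ R hR (by linarith) ?_ ?_) le_add_self
                · have := (abs_le.1 hs).1; linarith
                · have := (abs_le.1 hs).2; linarith
            calc m y * w y ≤ ENNReal.ofReal (S.Cst * M / dist x' y ^ d) * ENNReal.ofReal √(dist x' y / R) := by
                  gcongr; exact hmle y hy0
              _ = (ENNReal.ofReal M * ENNReal.ofReal S.Cst) * ENNReal.ofReal (√(dist x' y / R) / dist x' y ^ d) := by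
                  rw [← ENNReal.ofReal_mul (by positivity), ← ENNReal.ofReal_mul hM, ← ENNReal.ofReal_mul (by positivity)]
                  congr 1; ring
              _ ≤ _ := by gcongr
        _ ≤ ∫⁻ y, (ENNReal.ofReal M * ENNReal.ofReal S.Cst) * (psi x' (ε (i + 1)) y + psi x' (ε i) y) :=
            setLIntegral_le_lintegral _ _
        _ = (ENNReal.ofReal M * ENNReal.ofReal S.Cst) * ((∫⁻ y, psi x' (ε (i + 1)) y) + ∫⁻ y, psi x' (ε i) y) := by
            rw [lintegral_const_mul' _ _ (by finiteness), lintegral_add_left (psi_meas _ _)]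
        _ ≤ _ := by
            rw [mul_assoc, two_mul]
            gcongr
            · exact hψ x' _ (hε.2.1 _)
            · exact hψ x' _ (hε.2.1 _)
    have hfin : (ENNReal.ofReal M * (ENNReal.ofReal S.Cst * (2 * Cψ)) * ∫⁻ y, m y * (w y)⁻¹) ^ ((1:ℝ)/2) ≤
        ENNReal.ofReal M * K2 ^ ((1:ℝ)/2) := by
      rw [← half_sq]
      apply ENNReal.rpow_le_rpow _ (by norm_num)
      calc _ ≤ ENNReal.ofReal M * (ENNReal.ofReal S.Cst * (2 * Cψ)) * (ENNReal.ofReal M * (ENNReal.ofReal (2 * S.Cst) * Cφ)) := by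
            exact mul_le_mul_right hminv _
        _ = _ := by rw [hK2, ENNReal.rpow_two]; ring
    have hv := lN_boundary hρ m w hmm hwm hmw (fun i => A i \ A' i)
      (fun i => (meas_ann _ _ _).diff (meas_ann _ _ _))
      (fun i j hij => (ann_disj x hε.1.antitone hij).mono Set.sdiff_subset Set.sdiff_subset) _
      (fun i => hmwB i _ ((meas_ann _ _ _).diff (meas_ann _ _ _)) (fun y hy => Or.inl hy))
    have hv' := lN_boundary hρ m w hmm hwm hmw (fun i => A' i \ A i)
      (fun i => (meas_ann _ _ _).diff (meas_ann _ _ _))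
      (fun i j hij => (ann_disj x' hε.1.antitone hij).mono Set.sdiff_subset Set.sdiff_subset) _
      (fun i => hmwB i _ ((meas_ann _ _ _).diff (meas_ann _ _ _)) (fun y hy => Or.inr hy))
    calc _ ≤ _ := lN_mono (by linarith) hdecomp
      _ ≤ _ := lN_add3 (by linarith) _ _ _ _
      _ ≤ S.var ρ h x' + ENNReal.ofReal M * (ENNReal.ofReal S.Cst * Cφ) +
          ENNReal.ofReal M * K2 ^ ((1:ℝ)/2) + ENNReal.ofReal M * K2 ^ ((1:ℝ)/2) := by
          gcongr
          · exact S.le_var ρ hhi x' hε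
          · exact hv.trans hfin
          · exact hv'.trans hfin
      _ = _ := by ring
  -- step 2: pass from `h` to `g` at `x'`
  have step2 : S.var ρ h x' ≤ S.var ρ g x' + ENNReal.ofReal (S.Cst * 4 ^ d) * kap d * ENNReal.ofReal M := by
    have e : h = fun y => {y | 2 * R < dist x' y}.indicator g y + {y | 2 * R < dist x' y}ᶜ.indicator h y := by
      funext y
      by_cases hy : 2 * R < dist x' y
      · have h1 : R < dist x y := by
          have := dist_triangle x' x y
          rw [dist_comm x' x] at this
          linarith
        have hy' : y ∈ {y | 2 * R < dist x' y} := hy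
        rw [Set.indicator_of_mem hy', Set.indicator_of_notMem (show y ∉ {y | 2 * R < dist x' y}ᶜ from fun hc => hc hy'), hh,
          Set.indicator_of_mem (show y ∈ {y | R < dist x y} from h1), add_zero]
      · have hy' : y ∉ {y | 2 * R < dist x' y} := hy
        rw [Set.indicator_of_notMem hy', Set.indicator_of_mem (show y ∈ {y | 2 * R < dist x' y}ᶜ from hy'), zero_add]
    have i2 : Integrable ({y | 2 * R < dist x' y}ᶜ.indicator h) := hhi.indicator (meas_gt x' _).compl
    have h1 := S.var_add_le (ρ := ρ) (by linarith) (hg.indicator (meas_gt x' (2 * R))) i2 x'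
    rw [← e] at h1
    refine h1.trans ?_
    gcongr
    · exact S.var_trunc_le (by linarith) hg x' _
    · refine (S.var_le_l1 (by linarith) i2 x').trans ?_
      calc _ ≤ ∫⁻ y, (Metric.closedBall x' (2 * R)).indicator (fun _ => ENNReal.ofReal (S.Cst / (R / 2) ^ d * M)) y := by
            apply lintegral_mono
            intro y
            simp only
            by_cases hy : {y | 2 * R < dist x' y}ᶜ.indicator h y = 0
            · simp [hy]
            have hy1 : y ∈ {y | 2 * R < dist x' y}ᶜ := by
              by_contra hc; exact hy (Set.indicator_of_notMem hc _)
            rw [Set.indicator_of_mem hy1] at hy ⊢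
            have hy2 : R / 2 < dist x' y := by by_contra hc; exact hy (hh0' y (not_lt.1 hc))
            have hy3 : y ∈ Metric.closedBall x' (2 * R) := by
              rw [Metric.mem_closedBall, dist_comm]; exact not_lt.1 hy1
            rw [Set.indicator_of_mem hy3, Real.enorm_eq_ofReal_abs, abs_mul]
            apply ENNReal.ofReal_le_ofReal
            apply mul_le_mul _ (hhM y) (abs_nonneg _) (by positivity)
            refine (S.size' x' y (by linarith)).trans ?_
            gcongr
        _ = ENNReal.ofReal (S.Cst / (R / 2) ^ d * M) * (ENNReal.ofReal ((2 * R) ^ d) * kap d) := by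
            rw [lintegral_indicator Metric.isClosed_closedBall.measurableSet, setLIntegral_const, vol_cball _ (by positivity)]
        _ = _ := by
            rw [← mul_assoc, ← ENNReal.ofReal_mul (by positivity), mul_right_comm (ENNReal.ofReal (S.Cst * 4 ^ d)),
              ← ENNReal.ofReal_mul (by positivity)]
            congr 2
            have : (2 * R) ^ d = 4 ^ d * (R / 2) ^ d := by rw [← mul_pow]; congr 1; ring
            rw [this]
            have : (R / 2) ^ d ≠ 0 := by positivity
            field_simp
  calc _ ≤ _ := step1
    _ ≤ _ := add_le_add_left step2 _
    _ = _ := by ring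

/-! ### The bad part -/

/-- weight attached to a bad cube -/
def CZO.qL {d : ℕ} (S : CZO d) (z : Rd d) (L : Cube d) : ℝ :=
  S.phi (L.dm / dist z L.ctr) / dist z L.ctr ^ d

theorem CZO.qL_nonneg {d : ℕ} (S : CZO d) (z : Rd d) (L : Cube d) : 0 ≤ S.qL z L :=
  div_nonneg (S.phi_nonneg _) (by positivity)

theorem Cube.dm_pos {d : ℕ} (hd : 0 < d) (L : Cube d) : 0 < L.dm := by
  unfold Cube.dm
  have := L.hl
  positivity

theorem Cube.ctr_mem {d : ℕ} (L : Cube d) : L.ctr ∈ L.set := dyCube_center_mem L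

theorem tsum_indicator_eq {d : ℕ} {F : Set (Cube d)} (hF : F.PairwiseDisjoint Cube.set)
    (a : F → ℝ≥0∞) (L : F) (y : Rd d) (hy : y ∈ (L : Cube d).set) :
    ∑' L : F, (L : Cube d).set.indicator (fun _ => a L) y = a L := by
  rw [tsum_eq_single L]
  · rw [Set.indicator_of_mem hy]
  · intro L' hL'
    apply Set.indicator_of_notMem
    intro hy'
    exact Set.disjoint_left.1 (hF L'.2 L.2 (fun h => hL' (Subtype.ext h))) hy' hy

theorem CZO.act_smooth {d : ℕ} (hd : 0 < d) (S : CZO d) (x x' : Rd d) (L : Cube d)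
    (h1 : 20 * L.dm ≤ dist x' L.ctr) (h2 : dist x' L.ctr ≤ 2 * dist x L.ctr) (y : Rd d) (hy : y ∈ L.set) :
    |S.K x y - S.K x L.ctr| ≤ (S.Cst * 2 ^ (d + 1)) * S.qL x' L := by
  have hdm := L.dm_pos hd
  have hC := S.hCst
  have ht : 0 < dist x L.ctr := by linarith
  have ht' : 0 < dist x' L.ctr := by linarith
  have hcy : dist L.ctr y ≤ L.dm := L.dist_le L.ctr_mem hy
  rw [dist_comm x] at h2 ht
  have h3 := S.smooth L.ctr y x (dist_pos.1 ht) (by linarith)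
  have h4 := abs_nonneg (S.K L.ctr x - S.K y x)
  rw [abs_sub_comm]
  have h5 : S.ω (dist L.ctr y / dist L.ctr x) ≤ 2 * S.phi (L.dm / dist x' L.ctr) := by
    refine (S.ω_le_phi (by positivity)).trans (le_trans (S.phi_mono ?_) (S.phi_two (by positivity)))
    rw [← mul_div_assoc, div_le_div_iff₀ ht ht']
    nlinarith
  have h6 : 0 ≤ S.phi (L.dm / dist x' L.ctr) := S.phi_nonneg _
  calc _ ≤ S.Cst * S.ω (dist L.ctr y / dist L.ctr x) / dist L.ctr x ^ d := by linarith
    _ ≤ S.Cst * (2 * S.phi (L.dm / dist x' L.ctr)) / (dist x' L.ctr / 2) ^ d := by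
        gcongr
        linarith
    _ = _ := by
        unfold CZO.qL
        rw [div_pow]
        field_simp
        ring

theorem bad_bound {d : ℕ} (hd : 0 < d) (S : CZO d) {ρ : ℝ} (hρ : 2 ≤ ρ) :
    ∃ C : ℝ≥0∞, C ≠ ∞ ∧ ∀ (F : Set (Cube d)) (b : Rd d → ℝ) (M : ℝ) (x x' : Rd d) (R : ℝ),
      F.Countable → F.PairwiseDisjoint Cube.set → Measurable b → Integrable b →
      (∀ y, y ∉ ⋃ L ∈ F, Cube.set L → b y = 0) →
      (∀ L ∈ F, ∫ y in L.set, b y = 0) → (∀ L ∈ F, ∫⁻ y in L.set, ‖b y‖ₑ ≤ ENNReal.ofReal M * L.vol) →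
      0 ≤ M → (∀ L ∈ F, 20 * L.dm ≤ dist x' L.ctr) →
      (∀ L ∈ F, (∃ z ∈ L.set, R < dist x z) → dist x' L.ctr ≤ 2 * dist x L.ctr) →
      S.var ρ ({y | R < dist x y}.indicator b) x ≤
        C * (∑' L : F, (∫⁻ y in (L : Cube d).set, ‖b y‖ₑ) * ENNReal.ofReal (S.qL x' L)) +
        C * (ENNReal.ofReal M * ∑' L : F, (∫⁻ y in (L : Cube d).set, ‖b y‖ₑ) * ENNReal.ofReal (S.qL x' L)) ^ ((1:ℝ)/2) := by
  obtain ⟨Cψ, hCψ, hψ⟩ := psi_integral d hd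
  have hC0 := S.hCst
  set K1 : ℝ≥0∞ := ENNReal.ofReal (S.Cst * 2 ^ (d + 1)) with hK1
  set K2 : ℝ≥0∞ := (ENNReal.ofReal (2 * 4 ^ d * S.Cst) * (2 * Cψ)) * ENNReal.ofReal (2 * 4 ^ d * S.Cst) with hK2
  refine ⟨K1 + K2 ^ ((1:ℝ)/2), ?_, ?_⟩
  · have : K2 ^ ((1:ℝ)/2) ≠ ∞ := by
      apply ENNReal.rpow_ne_top_of_nonneg (by norm_num)
      simp only [hK2]
      finiteness
    simp only [hK1]
    finiteness
  intro F b M x x' R hFc hFd hbm hb hb0 hbL hbM hM hx' hact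
  have : Countable F := hFc.to_subtype
  set h : Rd d → ℝ := {y | R < dist x y}.indicator b with hh
  have hhi : Integrable h := hb.indicator (meas_gt x R)
  have hhm : Measurable h := hbm.indicator (meas_gt x R)
  have hh1 : ∀ y, R < dist x y → h y = b y := fun y hy =>
    Set.indicator_of_mem (show y ∈ {y | R < dist x y} from hy) _
  have hh2 : ∀ y, h y ≠ 0 → R < dist x y := fun y hy => by
    by_contra hc
    exact hy (Set.indicator_of_notMem (show y ∉ {y | R < dist x y} from hc) _)
  have hh3 : ∀ y, ‖h y‖ₑ ≤ ‖b y‖ₑ := fun y => enorm_indicator_le_enorm_self _ _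
  have hh4 : ∀ y, h y ≠ 0 → ∃ L : F, y ∈ (L : Cube d).set := by
    intro y hy
    by_contra hc
    push Not at hc
    apply hy
    rw [hh1 y (hh2 y hy)]
    apply hb0
    simp only [Set.mem_iUnion, not_exists]
    exact fun L hL hyL => hc ⟨L, hL⟩ hyL
  set W : F → ℝ≥0∞ := fun L => (∫⁻ y in (L : Cube d).set, ‖b y‖ₑ) * ENNReal.ofReal (S.qL x' L) with hW
  -- geometry of active cubes
  have geo : ∀ L : F, (∃ z ∈ (L : Cube d).set, R < dist x z) →
      0 < (L : Cube d).dm ∧ 20 * (L : Cube d).dm ≤ dist x' (L : Cube d).ctr ∧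
      dist x' (L : Cube d).ctr ≤ 2 * dist x (L : Cube d).ctr ∧
      ∀ z ∈ (L : Cube d).set, dist x z ≤ dist x (L : Cube d).ctr + (L : Cube d).dm ∧
        dist x (L : Cube d).ctr ≤ dist x z + (L : Cube d).dm := by
    intro L hL
    refine ⟨Cube.dm_pos hd _, hx' L L.2, hact L L.2 hL, fun z hz => ?_⟩
    have h1 := Cube.dist_le _ (Cube.ctr_mem (L : Cube d)) hz
    have h2 := dist_triangle x (L : Cube d).ctr z
    have h3 := dist_triangle x z (L : Cube d).ctr
    rw [dist_comm z] at h3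
    constructor <;> linarith
  apply S.var_le ρ hhi
  intro ε hε
  set A : ℕ → Set (Rd d) := fun i => ann x (ε (i + 1)) (ε i) with hA
  set P : ℕ → F → Prop := fun i L => (L : Cube d).set ⊆ A i ∧ ∀ z ∈ (L : Cube d).set, R < dist x z with hP
  set Gc : ℕ → F → Set (Rd d) := fun i L => if P i L then (L : Cube d).set else ∅ with hGc
  set G : ℕ → Set (Rd d) := fun i => ⋃ L, Gc i L with hG
  have hGLm : ∀ i L, MeasurableSet (Gc i L) := by
    intro i L
    simp only [hGc]
    split_ifs
    · exact Cube.meas _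
    · exact MeasurableSet.empty
  have hGm : ∀ i, MeasurableSet (G i) := fun i => MeasurableSet.iUnion (hGLm i)
  have hGLs : ∀ i L, Gc i L ⊆ (L : Cube d).set := by
    intro i L
    simp only [hGc]
    split_ifs <;> simp
  have hGA : ∀ i, G i ⊆ A i := by
    intro i
    apply Set.iUnion_subset
    intro L
    simp only [hGc]
    split_ifs with hc
    · exact hc.1
    · simp
  have hGd : ∀ i, Pairwise (Function.onFun Disjoint (Gc i)) := fun i L L' hne =>
    (hFd L.2 L'.2 (fun e => hne (Subtype.ext e))).mono (hGLs i L) (hGLs i L')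
  set m : Rd d → ℝ≥0∞ := fun y => ‖S.K x y * h y‖ₑ with hm
  have hmm : Measurable m := ((S.measKx x).mul hhm).enorm
  have hm0 : ∀ y, h y = 0 → m y = 0 := fun y hy => by simp [hm, hy]
  set w : Rd d → ℝ≥0∞ := fun y => ∑' L : F, (L : Cube d).set.indicator
    (fun _ => ENNReal.ofReal √(dist x (L : Cube d).ctr / (L : Cube d).dm)) y with hw
  have hwm : Measurable w := by
    apply Measurable.ennreal_tsum
    intro L
    exact measurable_const.indicator (Cube.meas _)
  have hwL : ∀ (L : F) (y : Rd d), y ∈ (L : Cube d).set →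
      w y = ENNReal.ofReal √(dist x (L : Cube d).ctr / (L : Cube d).dm) := fun L y hy =>
    tsum_indicator_eq hFd (fun L : F => ENNReal.ofReal √(dist x (L : Cube d).ctr / (L : Cube d).dm)) L y hy
  have hmw : ∀ y, m y ≠ 0 → w y ≠ 0 ∧ w y ≠ ∞ := by
    intro y hy
    have hy' : h y ≠ 0 := fun h0 => hy (hm0 y h0)
    obtain ⟨L, hL⟩ := hh4 y hy'
    obtain ⟨g1, g2, g3, g4⟩ := geo L ⟨y, hL, hh2 y hy'⟩
    rw [hwL L y hL]
    refine ⟨?_, ENNReal.ofReal_ne_top⟩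
    rw [ne_eq, ENNReal.ofReal_eq_zero, not_le, Real.sqrt_pos]
    have : 0 < dist x (L : Cube d).ctr := by linarith
    positivity
  -- size of `m` on a cube
  have hmL : ∀ (L : F) (y : Rd d), y ∈ (L : Cube d).set → h y ≠ 0 →
      m y ≤ ENNReal.ofReal (S.Cst * 2 ^ d / dist x (L : Cube d).ctr ^ d) * ‖b y‖ₑ := by
    intro L y hL hy
    obtain ⟨g1, g2, g3, g4⟩ := geo L ⟨y, hL, hh2 y hy⟩
    have g5 := g4 y hL
    have hp : 0 < dist x y := by linarith
    have h1 := S.size' x y hp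
    have hp2 : 0 < dist x (L : Cube d).ctr := by linarith
    simp only [hm, enorm_mul]
    refine mul_le_mul' ?_ (hh3 y)
    rw [Real.enorm_eq_ofReal_abs]
    apply ENNReal.ofReal_le_ofReal
    refine h1.trans ?_
    calc _ ≤ S.Cst / (dist x (L : Cube d).ctr / 2) ^ d := by gcongr; linarith
      _ = _ := by rw [div_pow]; field_simp
  have hsplit : ∀ (f : Rd d → ℝ≥0∞) (B : Set (Rd d)), MeasurableSet B → (∀ y, h y = 0 → f y = 0) →
      ∫⁻ y in B, f y = ∑' L : F, ∫⁻ y in B ∩ (L : Cube d).set, f y := by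
    intro f B hB hf
    rw [← lintegral_iUnion (fun L : F => hB.inter (Cube.meas _)) (fun L L' hne =>
      (hFd L.2 L'.2 (fun e => hne (Subtype.ext e))).mono Set.inter_subset_right Set.inter_subset_right)]
    rw [← Set.inter_iUnion]
    have hUm : MeasurableSet (⋃ L : F, (L : Cube d).set) := MeasurableSet.iUnion fun L => Cube.meas _
    rw [← lintegral_indicator hB, ← lintegral_indicator (hB.inter hUm)]
    congr 1
    funext y
    by_cases hy : h y = 0
    · have := hf y hy
      simp [Set.indicator, this]
    · obtain ⟨L, hL⟩ := hh4 y hy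
      have hyU : y ∈ ⋃ L : F, (L : Cube d).set := Set.mem_iUnion.2 ⟨L, hL⟩
      by_cases hyB : y ∈ B
      · rw [Set.indicator_of_mem hyB, Set.indicator_of_mem (Set.mem_inter hyB hyU)]
      · rw [Set.indicator_of_notMem hyB, Set.indicator_of_notMem (fun hc => hyB hc.1)]
  have hminv : ∫⁻ y, m y * (w y)⁻¹ ≤ ENNReal.ofReal (2 * 4 ^ d * S.Cst) * ∑' L, W L := by
    rw [← setLIntegral_univ, hsplit _ _ MeasurableSet.univ (fun y hy => by rw [hm0 y hy, zero_mul]),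
      ← ENNReal.tsum_mul_left]
    apply ENNReal.tsum_le_tsum
    intro L
    rw [Set.univ_inter]
    calc _ ≤ ∫⁻ y in (L : Cube d).set, (ENNReal.ofReal (2 * 4 ^ d * S.Cst) * ENNReal.ofReal (S.qL x' L)) * ‖b y‖ₑ := by
          apply setLIntegral_mono' (Cube.meas _)
          intro y hL
          by_cases hy : h y = 0
          · rw [hm0 y hy, zero_mul]; exact zero_le
          obtain ⟨g1, g2, g3, g4⟩ := geo L ⟨y, hL, hh2 y hy⟩
          have hp2 : 0 < dist x (L : Cube d).ctr := by linarith
          have hp3 : 0 < dist x' (L : Cube d).ctr := by linarith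
          rw [hwL L y hL, ← ENNReal.ofReal_inv_of_pos (by positivity), ← ENNReal.ofReal_mul (by positivity)]
          have e1 : (√(dist x (L : Cube d).ctr / (L : Cube d).dm))⁻¹ ≤ 2 * S.phi ((L : Cube d).dm / dist x' (L : Cube d).ctr) := by
            refine le_trans ?_ (S.phi_two (by positivity))
            refine le_trans ?_ (S.sqrt_le_phi _)
            rw [← Real.sqrt_inv]
            apply Real.sqrt_le_sqrt
            rw [inv_div, ← mul_div_assoc, div_le_div_iff₀ hp2 hp3]
            nlinarith
          calc _ ≤ ENNReal.ofReal (S.Cst * 2 ^ d / dist x (L : Cube d).ctr ^ d) * ‖b y‖ₑ *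
                ENNReal.ofReal (√(dist x (L : Cube d).ctr / (L : Cube d).dm))⁻¹ := by
                gcongr; exact hmL L y hL hy
            _ = ENNReal.ofReal (S.Cst * 2 ^ d / dist x (L : Cube d).ctr ^ d *
                (√(dist x (L : Cube d).ctr / (L : Cube d).dm))⁻¹) * ‖b y‖ₑ := by
                rw [ENNReal.ofReal_mul (by positivity)]; ring
            _ ≤ _ := by
                refine mul_le_mul_left (ENNReal.ofReal_le_ofReal ?_) _
                calc _ ≤ S.Cst * 2 ^ d / (dist x' (L : Cube d).ctr / 2) ^ d *
                      (2 * S.phi ((L : Cube d).dm / dist x' (L : Cube d).ctr)) := by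
                      gcongr; linarith
                  _ = _ := by
                      unfold CZO.qL
                      rw [show (4:ℝ) ^ d = 2 ^ d * 2 ^ d by rw [← mul_pow]; norm_num, div_pow]
                      field_simp
      _ = _ := by
          rw [lintegral_const_mul' _ _ (by finiteness)]
          simp only [hW]
          ring
  have hmwB : ∀ i, ∫⁻ y in A i \ G i, m y * w y ≤ ENNReal.ofReal M * (ENNReal.ofReal (2 * 4 ^ d * S.Cst) * (2 * Cψ)) := by
    intro i
    set s1 := max (ε (i + 1)) R with hs1
    have hs1p : 0 < s1 := lt_max_of_lt_left (hε.2.1 _)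
    have hsum : ∑' L : F, ∫⁻ y in (L : Cube d).set, (psi x s1 y + psi x (ε i) y) ≤ 2 * Cψ := by
      rw [← lintegral_iUnion (fun L : F => Cube.meas _) (fun L L' hne => hFd L.2 L'.2 (fun e => hne (Subtype.ext e)))]
      refine (setLIntegral_le_lintegral _ _).trans ?_
      rw [lintegral_add_left (psi_meas _ _), two_mul]
      exact add_le_add (hψ x _ hs1p) (hψ x _ (hε.2.1 _))
    rw [hsplit _ _ ((meas_ann _ _ _).diff (hGm i)) (fun y hy => by rw [hm0 y hy, zero_mul])]
    calc _ ≤ ∑' L : F, (ENNReal.ofReal M * ENNReal.ofReal (2 * 4 ^ d * S.Cst)) *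
          ∫⁻ y in (L : Cube d).set, (psi x s1 y + psi x (ε i) y) := by
          apply ENNReal.tsum_le_tsum
          intro L
          by_cases hex : ∃ y ∈ (A i \ G i) ∩ (L : Cube d).set, h y ≠ 0
          · obtain ⟨y0, ⟨⟨hyA, hyG⟩, hyL⟩, hy0⟩ := hex
            have hyR := hh2 y0 hy0
            obtain ⟨g1, g2, g3, g4⟩ := geo L ⟨y0, hyL, hyR⟩
            have hp2 : 0 < dist x (L : Cube d).ctr := by linarith
            have hnP : ¬ P i L := by
              intro hc
              apply hyG
              refine Set.mem_iUnion.2 ⟨L, ?_⟩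
              simp only [hGc, if_pos hc]
              exact hyL
            obtain ⟨z0, hz0L, hz0⟩ : ∃ z0 ∈ (L : Cube d).set, dist x z0 ≤ s1 ∨ ε i < dist x z0 := by
              by_contra hc
              push Not at hc
              apply hnP
              refine ⟨fun z hz => ⟨?_, (hc z hz).2⟩, fun z hz => ?_⟩
              · exact lt_of_le_of_lt (le_max_left _ _) (hc z hz).1
              · exact lt_of_le_of_lt (le_max_right _ _) (hc z hz).1
            have hdd : ∀ z ∈ (L : Cube d).set, ∀ z' ∈ (L : Cube d).set, dist x z ≤ dist x z' + (L : Cube d).dm := by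
              intro z hz z' hz'
              have := Cube.dist_le _ hz' hz
              have := dist_triangle x z' z
              linarith
            have hs1y : s1 < dist x y0 := max_lt hyA.1 hyR
            have hlow : ∀ z ∈ (L : Cube d).set,
                ENNReal.ofReal (√(dist x z / (L : Cube d).dm) / dist x z ^ d) ≤ psi x s1 z + psi x (ε i) z := by
              intro z hz
              have a1 := hdd z hz y0 hyL
              have a2 := hdd y0 hyL z hz
              have a3 := hdd z hz z0 hz0L
              have a4 := hdd z0 hz0L z hz
              have a5 := g4 z hz
              rcases hz0 with hz0 | hz0
              · refine le_trans (psi_lower _ _ _ _ g1 ?_ ?_ ?_) le_self_add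
                · rw [abs_le]; constructor <;> linarith
                · linarith
                · linarith
              · have hyA2 := hyA.2
                refine le_trans (psi_lower _ _ _ _ g1 ?_ ?_ ?_) le_add_self
                · rw [abs_le]; constructor <;> linarith
                · linarith
                · linarith
            calc _ ≤ ∫⁻ y in (A i \ G i) ∩ (L : Cube d).set, ENNReal.ofReal (S.Cst * 2 ^ d / dist x (L : Cube d).ctr ^ d *
                  √(dist x (L : Cube d).ctr / (L : Cube d).dm)) * ‖b y‖ₑ := by
                  apply setLIntegral_mono' (((meas_ann _ _ _).diff (hGm i)).inter (Cube.meas _))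
                  intro y hy
                  by_cases hyh : h y = 0
                  · rw [hm0 y hyh, zero_mul]; exact zero_le
                  rw [hwL L y hy.2, ENNReal.ofReal_mul (by positivity), mul_right_comm]
                  gcongr
                  exact hmL L y hy.2 hyh
              _ ≤ ∫⁻ y in (L : Cube d).set, ENNReal.ofReal (S.Cst * 2 ^ d / dist x (L : Cube d).ctr ^ d *
                  √(dist x (L : Cube d).ctr / (L : Cube d).dm)) * ‖b y‖ₑ :=
                  lintegral_mono_set Set.inter_subset_right
              _ ≤ ENNReal.ofReal (S.Cst * 2 ^ d / dist x (L : Cube d).ctr ^ d *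
                  √(dist x (L : Cube d).ctr / (L : Cube d).dm)) * (ENNReal.ofReal M * (L : Cube d).vol) := by
                  rw [lintegral_const_mul' _ _ (by finiteness)]
                  gcongr
                  exact hbM L L.2
              _ = ENNReal.ofReal M * ∫⁻ y in (L : Cube d).set, ENNReal.ofReal (S.Cst * 2 ^ d / dist x (L : Cube d).ctr ^ d *
                  √(dist x (L : Cube d).ctr / (L : Cube d).dm)) := by
                  rw [setLIntegral_const, Cube.volume_set]; ring
              _ ≤ ENNReal.ofReal M * ∫⁻ y in (L : Cube d).set, ENNReal.ofReal (2 * 4 ^ d * S.Cst) * (psi x s1 y + psi x (ε i) y) := by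
                  gcongr ENNReal.ofReal M * ?_
                  apply setLIntegral_mono' (Cube.meas _)
                  intro z hz
                  refine le_trans ?_ (mul_le_mul_right (hlow z hz) _)
                  rw [← ENNReal.ofReal_mul (by positivity)]
                  apply ENNReal.ofReal_le_ofReal
                  have a5 := g4 z hz
                  have hzp : 0 < dist x z := by linarith
                  have e1 : √(dist x (L : Cube d).ctr / (L : Cube d).dm) ≤ 2 * √(dist x z / (L : Cube d).dm) := by
                    rw [Real.sqrt_le_left (by positivity), mul_pow, Real.sq_sqrt (by positivity), ← mul_div_assoc]
                    gcongr
                    linarith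
                  calc _ ≤ S.Cst * 2 ^ d / (dist x z / 2) ^ d * (2 * √(dist x z / (L : Cube d).dm)) := by
                        gcongr
                        linarith
                    _ = _ := by
                        rw [show (4:ℝ) ^ d = 2 ^ d * 2 ^ d by rw [← mul_pow]; norm_num, div_pow]
                        field_simp
              _ = _ := by
                  rw [lintegral_const_mul' _ _ (by finiteness)]; ring
          · push Not at hex
            refine le_trans (le_of_eq ?_) zero_le
            refine (setLIntegral_eq_zero_iff (((meas_ann _ _ _).diff (hGm i)).inter (Cube.meas _)) (hmm.mul hwm)).2 ?_
            exact Eventually.of_forall fun y hy => by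
              rw [Pi.mul_apply, hm0 y (hex y hy), zero_mul]
      _ ≤ _ := by
          rw [ENNReal.tsum_mul_left, mul_assoc]
          gcongr
  have hcancel : ∀ i (L : F), ‖∫ y in Gc i L, S.K x y * h y‖ₑ ≤ K1 * (if P i L then W L else 0) := by
    intro i L
    simp only [hGc]
    split_ifs with hc
    · obtain ⟨g1, g2, g3, g4⟩ := geo L ⟨_, Cube.ctr_mem _, hc.2 _ (Cube.ctr_mem _)⟩
      have hKint : IntegrableOn (fun y => S.K x y * h y) (L : Cube d).set :=
        (S.K_int_ann hhi x (hε.2.1 _) _).mono_set hc.1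
      have e1 : ∫ y in (L : Cube d).set, S.K x y * h y =
          ∫ y in (L : Cube d).set, (S.K x y - S.K x (L : Cube d).ctr) * b y := by
        have e2 : ∫ y in (L : Cube d).set, S.K x y * h y = ∫ y in (L : Cube d).set, S.K x y * b y := by
          apply setIntegral_congr_fun (Cube.meas _)
          intro y hy
          simp only
          rw [hh1 y (hc.2 y hy)]
        have hKint2 : IntegrableOn (fun y => S.K x y * b y) (L : Cube d).set := by
          refine hKint.congr_fun (fun y hy => ?_) (Cube.meas _)
          simp only
          rw [hh1 y (hc.2 y hy)]
        simp_rw [sub_mul]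
        rw [integral_sub hKint2 (hb.integrableOn.const_mul _), integral_const_mul, hbL L L.2, mul_zero, sub_zero, e2]
      rw [e1]
      refine (enorm_integral_le_lintegral_enorm _).trans ?_
      calc _ ≤ ∫⁻ y in (L : Cube d).set, (K1 * ENNReal.ofReal (S.qL x' L)) * ‖b y‖ₑ := by
            apply setLIntegral_mono' (Cube.meas _)
            intro y hy
            rw [enorm_mul]
            gcongr
            rw [Real.enorm_eq_ofReal_abs, hK1, ← ENNReal.ofReal_mul (by positivity)]
            exact ENNReal.ofReal_le_ofReal (S.act_smooth hd x x' L g2 g3 y hy)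
        _ = _ := by
            rw [lintegral_const_mul' _ _ (by simp only [hK1]; finiteness)]
            simp only [hW]
            ring
    · simp
  have hdecomp : ∀ i, ‖S.D h x (ε (i + 1)) (ε i)‖ₑ ≤ (∑' L : F, K1 * (if P i L then W L else 0)) +
      ∫⁻ y in A i \ G i, m y := by
    intro i
    have hKint : IntegrableOn (fun y => S.K x y * h y) (A i) := S.K_int_ann hhi x (hε.2.1 _) _
    have e1 : S.D h x (ε (i + 1)) (ε i) = (∫ y in G i, S.K x y * h y) + ∫ y in A i \ G i, S.K x y * h y := by
      have := integral_inter_add_sdiff (s := A i) (hGm i) hKint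
      rw [Set.inter_eq_right.2 (hGA i)] at this
      exact this.symm
    rw [e1]
    refine (enorm_add_le _ _).trans (add_le_add ?_ (enorm_integral_le_lintegral_enorm _))
    simp only [hG]
    rw [integral_iUnion (hGLm i) (hGd i) (hKint.mono_set (hGA i))]
    refine (enorm_tsum_le_tsum_enorm).trans (ENNReal.tsum_le_tsum fun L => hcancel i L)
  have hU : ∑' i, ∑' L : F, K1 * (if P i L then W L else 0) ≤ K1 * ∑' L, W L := by
    simp_rw [ENNReal.tsum_mul_left]
    gcongr
    rw [ENNReal.tsum_comm]
    apply ENNReal.tsum_le_tsum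
    intro L
    by_cases hex : ∃ i0, P i0 L
    · obtain ⟨i0, hi0⟩ := hex
      rw [tsum_eq_single i0]
      · rw [if_pos hi0]
      · intro i hne
        rw [if_neg]
        intro hi
        exact Set.disjoint_left.1 (ann_disj x hε.1.antitone hne) (hi.1 (Cube.ctr_mem _)) (hi0.1 (Cube.ctr_mem _))
    · push Not at hex
      simp [hex]
  have hv := lN_boundary hρ m w hmm hwm hmw (fun i => A i \ G i)
      (fun i => (meas_ann _ _ _).diff (hGm i))
      (fun i j hij => (ann_disj x hε.1.antitone hij).mono Set.sdiff_subset Set.sdiff_subset) _ hmwB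
  calc _ ≤ _ := lN_mono (by linarith) hdecomp
    _ ≤ _ := lN_add (by linarith) _ _
    _ ≤ K1 * (∑' L, W L) + K2 ^ ((1:ℝ)/2) * (ENNReal.ofReal M * ∑' L, W L) ^ ((1:ℝ)/2) := by
        refine add_le_add ((lN_le_one (by linarith) _).trans hU) (hv.trans ?_)
        rw [← ENNReal.mul_rpow_of_nonneg _ _ (by norm_num)]
        apply ENNReal.rpow_le_rpow _ (by norm_num)
        refine (mul_le_mul_right hminv _).trans (le_of_eq ?_)
        rw [hK2]
        ring
    _ ≤ _ := by
        gcongr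
        · exact le_self_add
        · exact le_add_self

theorem vol_iUnion {d : ℕ} (F : Set (Cube d)) (hc : F.Countable) (hF : F.PairwiseDisjoint Cube.set) :
    (∑' L : F, (L : Cube d).vol) = volume (⋃ L ∈ F, Cube.set L) := by
  have : Countable F := hc.to_subtype
  rw [measure_biUnion hc hF (fun L _ => L.meas)]
  exact tsum_congr fun L => (Cube.volume_set _).symm

theorem ae_small {d : ℕ} (Q₀ : Cube d) (h : Rd d → ℝ≥0∞) (hm : Measurable h) (V : Set (Rd d))
    (hV : MeasurableSet V) (t : ℝ≥0∞) (ht : t ≠ ∞) (ht0 : t ≠ 0)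
    (hQ : ∀ Q, IsDyadicSubcube Q₀ Q → ¬ (Q.set ⊆ V) → ∫⁻ y in Q.set, h y ≤ t * Q.vol) :
    ∀ᵐ y ∂(volume : Measure (Rd d)), y ∈ Q₀.set → y ∉ V → h y ≤ t := by
  set E : Set (Rd d) := (Q₀.set \ V) ∩ {y | t < h y} with hE
  have hEm : MeasurableSet E := (Q₀.meas.diff hV).inter (measurableSet_lt measurable_const hm)
  have hEf : volume E ≠ ∞ := by
    refine ne_top_of_le_ne_top Q₀.vol_ne_top ?_
    rw [← Q₀.volume_set]
    exact measure_mono fun y hy => hy.1.1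
  have hE0 : volume E = 0 := by
    by_contra hne
    have h1 : t * volume E < ∫⁻ y in E, h y := by
      rw [← setLIntegral_const]
      refine setLIntegral_strict_mono hEm hne hm ?_ ?_
      · rw [setLIntegral_const]; finiteness
      · exact Eventually.of_forall fun y hy => hy.2
    have h2 : volume E < (∫⁻ y in E, h y) / t := by
      rw [ENNReal.lt_div_iff_mul_lt (Or.inl ht0) (Or.inl ht), mul_comm]; exact h1
    obtain ⟨U, hEU, hU, hUv⟩ := Set.exists_isOpen_lt_of_lt E _ h2
    rw [ENNReal.lt_div_iff_mul_lt (Or.inl ht0) (Or.inl ht), mul_comm] at hUv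
    obtain ⟨F, hc, hF1, hF2, hF3, -⟩ := maximal_cubes Q₀ (fun Q => Q.set ⊆ U)
    have : Countable F := hc.to_subtype
    refine absurd hUv (not_lt.2 ?_)
    calc ∫⁻ y in E, h y ≤ ∫⁻ y in ⋃ P : F, (P : Cube d).set ∩ E, h y := by
          refine lintegral_mono_set fun y hy => ?_
          obtain ⟨Q, q1, q2, q3⟩ := small_cube Q₀ U hU y hy.1.1 (hEU hy)
          have := hF3 Q q1 q2 q3
          simp only [Set.mem_iUnion, exists_prop] at this
          obtain ⟨P, hP, hyP⟩ := this
          exact Set.mem_iUnion.2 ⟨⟨P, hP⟩, hyP, hy⟩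
      _ ≤ ∑' P : F, ∫⁻ y in (P : Cube d).set ∩ E, h y := lintegral_iUnion_le _ _
      _ ≤ ∑' P : F, t * (P : Cube d).vol := by
          refine ENNReal.tsum_le_tsum fun P => ?_
          by_cases hPE : ((P : Cube d).set ∩ E).Nonempty
          · obtain ⟨y, hy1, hy2⟩ := hPE
            refine le_trans (lintegral_mono_set Set.inter_subset_left) ?_
            exact hQ P (hF1 P P.2).1 fun hs => hy2.1.2 (hs hy1)
          · rw [Set.not_nonempty_iff_eq_empty] at hPE
            rw [hPE]; simp
      _ = t * volume (⋃ L ∈ F, Cube.set L) := by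
          rw [ENNReal.tsum_mul_left, vol_iUnion F hc hF2]
      _ ≤ t * volume U := by
          refine mul_le_mul_right (measure_mono ?_) _
          exact Set.iUnion₂_subset fun P hP => (hF1 P hP).2.1
  have : ∀ᵐ y ∂(volume : Measure (Rd d)), y ∉ E := measure_eq_zero_iff_ae_notMem.1 hE0
  filter_upwards [this] with y hy h1 h2
  by_contra h3
  exact hy ⟨⟨h1, h2⟩, not_le.1 h3⟩

theorem cz_cubes {d : ℕ} (Q₀ : Cube d) (h : Rd d → ℝ≥0∞) (hm : Measurable h)
    (t : ℝ≥0∞) (ht : t ≠ ∞) (ht0 : t ≠ 0) (h0 : ∫⁻ y in Q₀.set, h y ≤ t * Q₀.vol) :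
    ∃ F : Set (Cube d), F.Countable ∧ F.PairwiseDisjoint Cube.set ∧
      (∀ L ∈ F, L.set ⊆ Q₀.set) ∧
      (∀ L ∈ F, ∫⁻ y in L.set, h y ≤ 2 ^ d * t * L.vol) ∧
      (t * ∑' L : F, (L : Cube d).vol ≤ ∫⁻ y, h y) ∧
      ∀ᵐ y ∂(volume : Measure (Rd d)), y ∈ Q₀.set → y ∉ (⋃ L ∈ F, Cube.set L) → h y ≤ t := by
  obtain ⟨F, hc, hF1, hF2, hF3, hF4⟩ := maximal_cubes Q₀ (fun Q => t * Q.vol < ∫⁻ y in Q.set, h y)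
  have : Countable F := hc.to_subtype
  have hVm : MeasurableSet (⋃ L ∈ F, Cube.set L) := MeasurableSet.biUnion hc fun L _ => L.meas
  refine ⟨F, hc, hF2, fun L hL => (hF1 L hL).2.2, ?_, ?_, ?_⟩
  · intro L hL
    obtain ⟨P, -, p2, p3, -, p5⟩ := hF4 (not_lt.2 h0) L hL
    refine le_trans (lintegral_mono_set p2) (le_trans (not_lt.1 p5) ?_)
    have : P.vol = 2 ^ d * L.vol := by
      unfold Cube.vol
      rw [p3, mul_pow, ENNReal.ofReal_mul (by positivity), ENNReal.ofReal_pow (by positivity)]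
      simp
    rw [this]
    exact le_of_eq (by ring)
  · rw [← ENNReal.tsum_mul_left]
    calc (∑' L : F, t * (L : Cube d).vol) ≤ ∑' L : F, ∫⁻ y in (L : Cube d).set, h y :=
          ENNReal.tsum_le_tsum fun L => (hF1 L L.2).2.1.le
      _ = ∫⁻ y in ⋃ L : F, (L : Cube d).set, h y := by
          rw [lintegral_iUnion (fun L => Cube.meas _)]
          intro L L' hne
          exact hF2 L.2 L'.2 fun h => hne (Subtype.ext h)
      _ ≤ _ := setLIntegral_le_lintegral _ _
  · refine ae_small Q₀ h hm _ hVm t ht ht0 fun Q q1 q2 => ?_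
    by_contra q3
    exact q2 (hF3 Q q1 (not_le.1 q3))

structure CZData {d : ℕ} (f : Rd d → ℝ) (lam : ℝ) (F : Set (Cube d)) (g b : Rd d → ℝ) : Prop where
  cnt : F.Countable
  dis : F.PairwiseDisjoint Cube.set
  gm : Measurable g
  bm : Measurable b
  gi : Integrable g
  bi : Integrable b
  fgb : f =ᵐ[volume] fun y => g y + b y
  gle : ∀ y, |g y| ≤ 2 ^ d * lam
  g1 : ∫⁻ y, ‖g y‖ₑ ≤ ∫⁻ y, ‖f y‖ₑ
  b0 : ∀ y, y ∉ (⋃ L ∈ F, Cube.set L) → b y = 0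
  bL : ∀ L ∈ F, ∫ y in L.set, b y = 0
  bLe : ∀ L ∈ F, ∫⁻ y in L.set, ‖b y‖ₑ ≤ ENNReal.ofReal (2 * 2 ^ d * lam) * L.vol
  bsum : ∑' L : F, ∫⁻ y in (L : Cube d).set, ‖b y‖ₑ ≤ 2 * ∫⁻ y, ‖f y‖ₑ
  vsum : ENNReal.ofReal lam * ∑' L : F, (L : Cube d).vol ≤ ∫⁻ y, ‖f y‖ₑ
  fL : ∀ L ∈ F, ∫⁻ y in L.set, ‖f y‖ₑ ≤ ENNReal.ofReal (2 ^ d * lam) * L.vol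
  fsm : ∀ᵐ y ∂(volume : Measure (Rd d)), y ∉ (⋃ L ∈ F, Cube.set L) → ‖f y‖ₑ ≤ ENNReal.ofReal lam

theorem cz_decomp {d : ℕ} (Q₀ : Cube d) (f : Rd d → ℝ) (hm : Measurable f) (hi : Integrable f)
    (hs : ∀ x, x ∉ Q₀.set → f x = 0) (lam : ℝ) (hl : 0 < lam)
    (h0 : ∫⁻ y, ‖f y‖ₑ ≤ ENNReal.ofReal lam * Q₀.vol) :
    ∃ F g b, CZData f lam F g b := by
  obtain ⟨F, hc, hdis, -, hL, hvs, hae⟩ := cz_cubes Q₀ (fun y => ‖f y‖ₑ) hm.enorm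
    (ENNReal.ofReal lam) ENNReal.ofReal_ne_top (by simpa using hl)
    (le_trans (setLIntegral_le_lintegral _ _) h0)
  have : Countable F := hc.to_subtype
  have h2d : (2 : ℝ≥0∞) ^ d * ENNReal.ofReal lam = ENNReal.ofReal (2 ^ d * lam) := by
    rw [ENNReal.ofReal_mul (by positivity), ENNReal.ofReal_pow (by positivity)]; simp
  rw [h2d] at hL
  set V : Set (Rd d) := ⋃ L ∈ F, Cube.set L with hV
  have hVm : MeasurableSet V := MeasurableSet.biUnion hc fun L _ => L.meas
  have hVU : V = ⋃ L : F, (L : Cube d).set := by rw [hV, Set.biUnion_eq_iUnion]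
  have hpd : Pairwise fun L L' : F => Disjoint (L : Cube d).set (L' : Cube d).set := by
    intro L L' hne
    exact hdis L.2 L'.2 fun h => hne (Subtype.ext h)
  have hsub : ∀ L ∈ F, L.set ⊆ V := fun L hL => Set.subset_biUnion_of_mem (u := Cube.set) hL
  have hfsm : ∀ᵐ y ∂(volume : Measure (Rd d)), y ∉ V → ‖f y‖ₑ ≤ ENNReal.ofReal lam := by
    filter_upwards [hae] with y hy h1
    by_cases hq : y ∈ Q₀.set
    · exact hy hq h1
    · rw [hs y hq]; simp
  set α : Cube d → ℝ := fun L => (L.l ^ d)⁻¹ * ∫ y in L.set, f y with hα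
  have hα1 : ∀ L : Cube d, ∫ y in L.set, f y = α L * L.l ^ d := by
    intro L
    have := L.hl
    simp only [hα]; field_simp
  have hα2 : ∀ L : Cube d, ‖α L‖ₑ * L.vol ≤ ∫⁻ y in L.set, ‖f y‖ₑ := by
    intro L
    have h1 : ‖α L‖ₑ * L.vol = ‖∫ y in L.set, f y‖ₑ := by
      rw [hα1 L, enorm_mul (α L), Cube.vol, Real.enorm_of_nonneg (pow_nonneg L.hl.le d)]
    rw [h1]; exact enorm_integral_le_lintegral_enorm _
  have hα3 : ∀ L ∈ F, |α L| ≤ 2 ^ d * lam := by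
    intro L hLF
    have h1 := (hα2 L).trans (hL L hLF)
    rw [ENNReal.mul_le_mul_iff_left L.vol_pos.ne' L.vol_ne_top, Real.enorm_eq_ofReal_abs,
      ENNReal.ofReal_le_ofReal_iff (by positivity)] at h1
    exact h1
  set f' : Rd d → ℝ := {y | |f y| ≤ lam}.indicator f with hf'
  have hf'm : Measurable f' := hm.indicator (measurableSet_le hm.abs measurable_const)
  obtain ⟨g, hgm, hg⟩ := exists_measurable_piecewise
    (fun o : Option F => o.elim Vᶜ (fun L => (L : Cube d).set))
    (by rintro (_ | L); exacts [hVm.compl, Cube.meas _])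
    (fun o : Option F => o.elim f' (fun L => fun _ => α L))
    (by rintro (_ | L); exacts [hf'm, measurable_const])
    (by
      rintro (_ | L) (_ | L') hne
      · exact absurd rfl hne
      · rintro y ⟨h1, h2⟩; exact absurd (hsub L' L'.2 h2) h1
      · rintro y ⟨h1, h2⟩; exact absurd (hsub L L.2 h1) h2
      · rintro y ⟨h1, h2⟩
        exact absurd h2 (Set.disjoint_left.1 (hpd (fun h => hne (by rw [h]))) h1))
  have hg0 : ∀ y, y ∉ V → g y = f' y := fun y hy => hg none hy
  have hgL : ∀ L ∈ F, ∀ y ∈ L.set, g y = α L := fun L hLF y hy => hg (some ⟨L, hLF⟩) hy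
  have hf'le : ∀ y, ‖f' y‖ₑ ≤ ‖f y‖ₑ := fun y => by
    rw [hf']; exact enorm_indicator_le_enorm_self _ _
  have hgLi : ∀ L ∈ F, ∫⁻ y in L.set, ‖g y‖ₑ ≤ ∫⁻ y in L.set, ‖f y‖ₑ := by
    intro L hLF
    rw [setLIntegral_congr_fun (g := fun _ => ‖α L‖ₑ) L.meas (fun y hy => by
      simp only [hgL L hLF y hy]), setLIntegral_const, L.volume_set]
    exact hα2 L
  have hg1 : ∫⁻ y, ‖g y‖ₑ ≤ ∫⁻ y, ‖f y‖ₑ := by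
    rw [← lintegral_add_compl _ hVm, ← lintegral_add_compl (fun y => ‖f y‖ₑ) hVm]
    refine add_le_add ?_ ?_
    · rw [hVU, lintegral_iUnion (fun L => Cube.meas _) hpd, lintegral_iUnion (fun L => Cube.meas _) hpd]
      exact ENNReal.tsum_le_tsum fun L => hgLi L L.2
    · refine setLIntegral_mono' hVm.compl fun y hy => ?_
      rw [hg0 y hy]; exact hf'le y
  have hgi : Integrable g := ⟨hgm.aestronglyMeasurable, lt_of_le_of_lt hg1 hi.2⟩
  have hbm : Measurable (V.indicator fun y => f y - g y) := (hm.sub hgm).indicator hVm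
  have hbLi : ∀ L ∈ F, ∫⁻ y in L.set, ‖V.indicator (fun y => f y - g y) y‖ₑ ≤
      2 * ∫⁻ y in L.set, ‖f y‖ₑ := by
    intro L hLF
    calc ∫⁻ y in L.set, ‖V.indicator (fun y => f y - g y) y‖ₑ
        ≤ ∫⁻ y in L.set, (‖f y‖ₑ + ‖g y‖ₑ) :=
          lintegral_mono fun y => (enorm_indicator_le_enorm_self _ _).trans enorm_sub_le
      _ = (∫⁻ y in L.set, ‖f y‖ₑ) + ∫⁻ y in L.set, ‖g y‖ₑ := lintegral_add_left hm.enorm _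
      _ ≤ (∫⁻ y in L.set, ‖f y‖ₑ) + ∫⁻ y in L.set, ‖f y‖ₑ := by
          exact add_le_add le_rfl (hgLi L hLF)
      _ = _ := by rw [two_mul]
  refine ⟨F, g, V.indicator fun y => f y - g y, hc, hdis, hgm, hbm, hgi,
    (hi.sub hgi).indicator hVm, ?_, ?_, hg1, ?_, ?_, ?_, ?_, hvs, hL, hfsm⟩
  · filter_upwards [hfsm] with y hy
    by_cases hyV : y ∈ V
    · rw [Set.indicator_of_mem hyV]; ring
    · have h1 := hy hyV
      rw [Real.enorm_eq_ofReal_abs, ENNReal.ofReal_le_ofReal_iff hl.le] at h1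
      rw [Set.indicator_of_notMem hyV, hg0 y hyV, hf', Set.indicator_of_mem (by exact h1)]; ring
  · intro y
    by_cases hyV : y ∈ V
    · rw [hV] at hyV
      simp only [Set.mem_iUnion, exists_prop] at hyV
      obtain ⟨L, hLF, hyL⟩ := hyV
      rw [hgL L hLF y hyL]; exact hα3 L hLF
    · rw [hg0 y hyV, hf']
      have h1 : lam ≤ 2 ^ d * lam := by
        have : (1 : ℝ) ≤ 2 ^ d := one_le_pow₀ (by norm_num)
        nlinarith
      by_cases hy : |f y| ≤ lam
      · rw [Set.indicator_of_mem (by exact hy)]; linarith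
      · rw [Set.indicator_of_notMem (by exact hy)]; simp; positivity
  · intro y hy; exact Set.indicator_of_notMem hy _
  · intro L hLF
    rw [setIntegral_congr_fun (g := fun y => f y - α L) L.meas (fun y hy => by
      simp only [Set.indicator_of_mem (hsub L hLF hy), hgL L hLF y hy])]
    rw [integral_sub hi.integrableOn (integrableOn_const (by rw [L.volume_set]; exact L.vol_ne_top)),
      setIntegral_const, hα1, Measure.real, L.volume_set, Cube.vol,
      ENNReal.toReal_ofReal (pow_nonneg L.hl.le d)]
    simp; ring
  · intro L hLF
    refine (hbLi L hLF).trans ?_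
    have h1 : ENNReal.ofReal (2 * 2 ^ d * lam) = 2 * ENNReal.ofReal (2 ^ d * lam) := by
      rw [mul_assoc, ENNReal.ofReal_mul (by positivity)]; simp
    rw [h1, mul_assoc]
    exact mul_le_mul_right (hL L hLF) _
  · calc _ ≤ ∑' L : F, 2 * ∫⁻ y in (L : Cube d).set, ‖f y‖ₑ :=
          ENNReal.tsum_le_tsum fun L => hbLi L L.2
      _ = 2 * ∫⁻ y in V, ‖f y‖ₑ := by
          rw [ENNReal.tsum_mul_left, hVU, lintegral_iUnion (fun L => Cube.meas _) hpd]
      _ ≤ _ := mul_le_mul_right (setLIntegral_le_lintegral _ _) _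

theorem excA {d : ℕ} (S : CZO d) (ρ q : ℝ) (hρ : 0 < ρ) (hq : 1 < q) (hbdd : S.VarBdd ρ q) :
    ∃ C : ℝ≥0∞, C ≠ ∞ ∧ ∀ (g : Rd d → ℝ) (lam : ℝ), 0 < lam → Measurable g → Integrable g →
      (∀ y, |g y| ≤ 2 ^ d * lam) →
      ENNReal.ofReal lam * volume {z | ENNReal.ofReal lam < S.var ρ g z} ≤ C * ∫⁻ y, ‖g y‖ₑ := by
  obtain ⟨A, hA, h⟩ := hbdd
  refine ⟨ENNReal.ofReal A * ENNReal.ofReal (2 ^ d) ^ (q - 1),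
    ENNReal.mul_ne_top ENNReal.ofReal_ne_top
      (ENNReal.rpow_ne_top_of_nonneg (by linarith) ENNReal.ofReal_ne_top), ?_⟩
  intro g lam hl hm hi hg
  set t := ENNReal.ofReal lam with ht
  have ht0 : t ≠ 0 := by simpa [ht] using hl
  have htt : t ≠ ∞ := ENNReal.ofReal_ne_top
  have h1 : t ^ q * volume {z | t < S.var ρ g z} ≤ ∫⁻ x, S.var ρ g x ^ q := by
    refine le_trans (mul_le_mul_right (measure_mono ?_) _)
      (mul_meas_ge_le_lintegral ((S.exists_meas_var hρ hm hi).pow_const q) (t ^ q))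
    intro z hz
    exact ENNReal.rpow_le_rpow (le_of_lt hz) (by linarith)
  have h2 : ∫⁻ x, ENNReal.ofReal |g x| ^ q ≤
      (ENNReal.ofReal (2 ^ d) * t) ^ (q - 1) * ∫⁻ x, ‖g x‖ₑ := by
    rw [← lintegral_const_mul _ hm.enorm]
    refine lintegral_mono fun x => ?_
    have e : q = (q - 1) + 1 := by ring
    simp only
    conv_lhs => rw [e]
    rw [ENNReal.rpow_add_of_nonneg _ _ (by linarith) (by norm_num), ENNReal.rpow_one,
      Real.enorm_eq_ofReal_abs]
    refine mul_le_mul' (ENNReal.rpow_le_rpow ?_ (by linarith)) le_rfl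
    rw [ht, ← ENNReal.ofReal_mul (by positivity)]
    exact ENNReal.ofReal_le_ofReal (hg x)
  have h3 := (h1.trans (h g hm)).trans (mul_le_mul_right h2 _)
  have e : t ^ q = t ^ (q - 1) * t := by
    conv_lhs => rw [show q = (q - 1) + 1 by ring]
    rw [ENNReal.rpow_add_of_nonneg _ _ (by linarith) (by norm_num), ENNReal.rpow_one]
  rw [e, ENNReal.mul_rpow_of_nonneg _ _ (by linarith : (0:ℝ) ≤ q - 1)] at h3
  have hp0 : t ^ (q - 1) ≠ 0 := by
    intro h0
    rw [ENNReal.rpow_eq_zero_iff] at h0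
    rcases h0 with h0 | h0
    · exact ht0 h0.1
    · exact htt h0.1
  have hpt : t ^ (q - 1) ≠ ∞ := ENNReal.rpow_ne_top_of_nonneg (by linarith) htt
  rw [← ENNReal.mul_le_mul_iff_right hp0 hpt]
  calc _ = t ^ (q - 1) * t * volume {z | t < S.var ρ g z} := by ring
    _ ≤ _ := h3
    _ = _ := by ring

theorem exc_bound {d : ℕ} (hd : 0 < d) (S : CZO d) (ρ q : ℝ) (hρ : 0 < ρ) (hq : 1 < q)
    (hbdd : S.VarBdd ρ q) :
    ∃ C : ℝ≥0∞, C ≠ ∞ ∧ ∀ (f : Rd d → ℝ) (lam : ℝ) (F : Set (Cube d)) (g b : Rd d → ℝ), 0 < lam →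
      CZData f lam F g b →
      ∃ E : Set (Rd d), ENNReal.ofReal lam * volume E ≤ C * ∫⁻ y, ‖f y‖ₑ ∧
        ∀ z, z ∉ E → S.var ρ g z ≤ ENNReal.ofReal lam ∧
          (∀ L ∈ F, 20 * L.dm ≤ dist z L.ctr) ∧
          (∑' L : F, (∫⁻ y in (L : Cube d).set, ‖b y‖ₑ) * ENNReal.ofReal (S.qL z L)) ≤
            ENNReal.ofReal lam := by
  obtain ⟨CA, hCA, hA⟩ := excA S ρ q hρ hq hbdd
  obtain ⟨CC, hCC, hC⟩ := S.phi_integral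
  refine ⟨CA + ENNReal.ofReal ((20 * d) ^ d) * kap d + 2 * CC, ?_, ?_⟩
  · have := kap_ne_top d
    finiteness
  intro f lam F g b hl D
  have hcF : Countable F := D.cnt.to_subtype
  set t := ENNReal.ofReal lam with ht
  set β : F → ℝ≥0∞ := fun L => ∫⁻ y in (L : Cube d).set, ‖b y‖ₑ with hβ
  set W : Rd d → ℝ≥0∞ := fun z => ∑' L : F, β L * {z | (L : Cube d).dm ≤ dist (L : Cube d).ctr z}.indicator
    (fun z => ENNReal.ofReal (S.phi ((L : Cube d).dm / dist (L : Cube d).ctr z) / dist (L : Cube d).ctr z ^ d)) z with hW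
  have hms : ∀ L : Cube d, MeasurableSet {z : Rd d | L.dm ≤ dist L.ctr z} := fun L =>
    measurableSet_le measurable_const (by fun_prop)
  have hmL : ∀ L : Cube d, Measurable fun z : Rd d =>
      ENNReal.ofReal (S.phi (L.dm / dist L.ctr z) / dist L.ctr z ^ d) := by
    intro L
    have h1 := S.phi_mono.measurable
    have h2 : Measurable fun z : Rd d => dist L.ctr z := by fun_prop
    exact ((h1.comp (h2.const_div _)).div (h2.pow_const d)).ennreal_ofReal
  have hmt : ∀ L : F, Measurable fun z => β L * {z | (L : Cube d).dm ≤ dist (L : Cube d).ctr z}.indicator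
    (fun z => ENNReal.ofReal (S.phi ((L : Cube d).dm / dist (L : Cube d).ctr z) / dist (L : Cube d).ctr z ^ d)) z :=
    fun L => ((hmL L).indicator (hms L)).const_mul _
  have hWm : Measurable W := Measurable.ennreal_tsum hmt
  have hWi : ∫⁻ z, W z ≤ 2 * CC * ∫⁻ y, ‖f y‖ₑ := by
    calc ∫⁻ z, W z = ∑' L : F, ∫⁻ z, β L * {z | (L : Cube d).dm ≤ dist (L : Cube d).ctr z}.indicator
          (fun z => ENNReal.ofReal (S.phi ((L : Cube d).dm / dist (L : Cube d).ctr z) / dist (L : Cube d).ctr z ^ d)) z :=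
          lintegral_tsum fun L => (hmt L).aemeasurable
      _ ≤ ∑' L : F, β L * CC := by
          refine ENNReal.tsum_le_tsum fun L => ?_
          rw [lintegral_const_mul _ ((hmL L).indicator (hms L)), lintegral_indicator (hms L)]
          exact mul_le_mul_right (hC _ _ (Cube.dm_pos hd _)) _
      _ ≤ (2 * ∫⁻ y, ‖f y‖ₑ) * CC := by
          rw [ENNReal.tsum_mul_right]
          exact mul_le_mul_left D.bsum _
      _ = _ := by ring
  refine ⟨({z | t < S.var ρ g z} ∪ ⋃ L : F, Metric.closedBall (L : Cube d).ctr (20 * (L : Cube d).dm)) ∪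
    {z | t < W z}, ?_, ?_⟩
  · have hB : t * volume (⋃ L : F, Metric.closedBall (L : Cube d).ctr (20 * (L : Cube d).dm)) ≤
        ENNReal.ofReal ((20 * d) ^ d) * kap d * ∫⁻ y, ‖f y‖ₑ := by
      calc _ ≤ t * ∑' L : F, volume (Metric.closedBall (L : Cube d).ctr (20 * (L : Cube d).dm)) :=
            mul_le_mul_right (measure_iUnion_le _) _
        _ = t * ∑' L : F, (ENNReal.ofReal ((20 * d) ^ d) * kap d) * (L : Cube d).vol := by
            congr 1
            refine tsum_congr fun L => ?_
            have h1 := Cube.dm_pos hd (L : Cube d)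
            have h2 := (L : Cube d).hl
            rw [vol_cball _ (by positivity), Cube.vol, Cube.dm,
              show (20 * ((d:ℝ) * (L : Cube d).l)) ^ d = (20 * d) ^ d * (L : Cube d).l ^ d by
                rw [← mul_pow]; ring, ENNReal.ofReal_mul (by positivity)]
            ring
        _ = ENNReal.ofReal ((20 * d) ^ d) * kap d * (t * ∑' L : F, (L : Cube d).vol) := by
            rw [ENNReal.tsum_mul_left]; ring
        _ ≤ _ := mul_le_mul_right D.vsum _
    have hCm : t * volume {z | t < W z} ≤ 2 * CC * ∫⁻ y, ‖f y‖ₑ := by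
      refine le_trans (le_trans (mul_le_mul_right (measure_mono ?_) _)
        (mul_meas_ge_le_lintegral hWm t)) hWi
      intro z hz; exact (show t < W z from hz).le
    have hAm := (hA g lam hl D.gm D.gi D.gle).trans (mul_le_mul_right D.g1 _)
    calc _ ≤ t * (volume {z | t < S.var ρ g z} +
            volume (⋃ L : F, Metric.closedBall (L : Cube d).ctr (20 * (L : Cube d).dm)) +
            volume {z | t < W z}) :=
          mul_le_mul_right ((measure_union_le _ _).trans (add_le_add (measure_union_le _ _) le_rfl)) _
      _ = t * volume {z | t < S.var ρ g z} +
            t * volume (⋃ L : F, Metric.closedBall (L : Cube d).ctr (20 * (L : Cube d).dm)) +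
            t * volume {z | t < W z} := by ring
      _ ≤ _ := add_le_add (add_le_add hAm hB) hCm
      _ = _ := by ring
  · intro z hz
    simp only [Set.mem_union, not_or, Set.mem_iUnion, not_exists, Metric.mem_closedBall, not_le] at hz
    obtain ⟨⟨z1, z2⟩, z3⟩ := hz
    have z2' : ∀ L ∈ F, 20 * L.dm ≤ dist z L.ctr := fun L hL => (z2 ⟨L, hL⟩).le
    refine ⟨not_lt.1 z1, z2', ?_⟩
    refine le_trans (le_of_eq ?_) (not_lt.1 z3)
    refine tsum_congr fun L => ?_
    have h1 := Cube.dm_pos hd (L : Cube d)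
    have h2 := z2' L L.2
    rw [Set.indicator_of_mem (by rw [Set.mem_ofPred_eq, dist_comm]; linarith), CZO.qL, dist_comm z]

/-- the good points of a decomposition -/
def GoodPt {d : ℕ} (S : CZO d) (ρ lam : ℝ) (F : Set (Cube d)) (g b : Rd d → ℝ) (z : Rd d) : Prop :=
  S.var ρ g z ≤ ENNReal.ofReal lam ∧ (∀ L ∈ F, 20 * L.dm ≤ dist z L.ctr) ∧
    (∑' L : F, (∫⁻ y in (L : Cube d).set, ‖b y‖ₑ) * ENNReal.ofReal (S.qL z L)) ≤ ENNReal.ofReal lam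

theorem ball_mass {d : ℕ} {f : Rd d → ℝ} {lam : ℝ} {F : Set (Cube d)} {g b : Rd d → ℝ}
    (D : CZData f lam F g b) (x x' : Rd d) (R : ℝ) (hR : 0 < R) (hx : dist x x' ≤ R)
    (hg : ∀ L ∈ F, 20 * L.dm ≤ dist x' L.ctr) :
    ∫⁻ y in Metric.closedBall x R, ‖f y‖ₑ ≤
      ENNReal.ofReal (1 + 2 ^ d) * ENNReal.ofReal lam * volume (Metric.closedBall x (2 * R)) := by
  have hcF : Countable F := D.cnt.to_subtype
  set t := ENNReal.ofReal lam with ht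
  set V : Set (Rd d) := ⋃ L ∈ F, Cube.set L with hV
  have hVm : MeasurableSet V := MeasurableSet.biUnion D.cnt fun L _ => L.meas
  set B := Metric.closedBall x R with hB
  set B2 := Metric.closedBall x (2 * R) with hB2
  have hBB : B ⊆ B2 := Metric.closedBall_subset_closedBall (by linarith)
  have h1 : ∫⁻ y in B \ V, ‖f y‖ₑ ≤ t * volume B2 := by
    calc ∫⁻ y in B \ V, ‖f y‖ₑ ≤ ∫⁻ y in B \ V, t := by
          refine setLIntegral_mono_ae' (Metric.isClosed_closedBall.measurableSet.diff hVm) ?_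
          filter_upwards [D.fsm] with y hy hy2
          exact hy hy2.2
      _ = t * volume (B \ V) := setLIntegral_const _ _
      _ ≤ _ := mul_le_mul_right (measure_mono (Set.sdiff_subset.trans hBB)) _
  have h2 : ∫⁻ y in ⋃ L : F, (L : Cube d).set ∩ B, ‖f y‖ₑ ≤ ENNReal.ofReal (2 ^ d) * t * volume B2 := by
    calc _ ≤ ∑' L : F, ∫⁻ y in (L : Cube d).set ∩ B, ‖f y‖ₑ := lintegral_iUnion_le _ _
      _ ≤ ∑' L : F, ENNReal.ofReal (2 ^ d) * t * volume ((L : Cube d).set ∩ B2) := by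
          refine ENNReal.tsum_le_tsum fun L => ?_
          by_cases hLB : ((L : Cube d).set ∩ B).Nonempty
          · obtain ⟨z, hz1, hz2⟩ := hLB
            have a1 := hg L L.2
            have a2 : dist x z ≤ R := by rw [dist_comm]; exact hz2
            have a3 := Cube.dist_le (L : Cube d) hz1 (Cube.ctr_mem (L : Cube d))
            have a4 := dist_triangle4 x' x z (L : Cube d).ctr
            rw [dist_comm x' x] at a4
            have hs : (L : Cube d).set ⊆ B2 := by
              intro y hy
              have a5 := Cube.dist_le (L : Cube d) hy hz1
              have a6 := dist_triangle y z x
              rw [dist_comm z x] at a6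
              rw [hB2, Metric.mem_closedBall]
              linarith
            rw [Set.inter_eq_left.2 hs, Cube.volume_set, ht, ← ENNReal.ofReal_mul (by positivity)]
            exact le_trans (lintegral_mono_set Set.inter_subset_left) (D.fL L L.2)
          · rw [Set.not_nonempty_iff_eq_empty] at hLB
            rw [hLB]; simp
      _ = ENNReal.ofReal (2 ^ d) * t * ∑' L : F, volume ((L : Cube d).set ∩ B2) := ENNReal.tsum_mul_left
      _ ≤ _ := by
          refine mul_le_mul_right ?_ _
          rw [← measure_iUnion]
          · exact measure_mono (Set.iUnion_subset fun L => Set.inter_subset_right)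
          · intro L L' hne
            exact (D.dis L.2 L'.2 fun h => hne (Subtype.ext h)).mono Set.inter_subset_left Set.inter_subset_left
          · exact fun L => (Cube.meas _).inter Metric.isClosed_closedBall.measurableSet
  calc _ ≤ ∫⁻ y in (B \ V) ∪ ⋃ L : F, (L : Cube d).set ∩ B, ‖f y‖ₑ := by
        refine lintegral_mono_set fun y hy => ?_
        by_cases hyV : y ∈ V
        · right
          rw [hV] at hyV
          simp only [Set.mem_iUnion, exists_prop] at hyV
          obtain ⟨L, hL, hyL⟩ := hyV
          exact Set.mem_iUnion.2 ⟨⟨L, hL⟩, hyL, hy⟩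
        · left; exact ⟨hy, hyV⟩
    _ ≤ _ := lintegral_union_le _ _ _
    _ ≤ _ := add_le_add h1 h2
    _ = _ := by
        rw [ENNReal.ofReal_add (by norm_num) (by positivity), ENNReal.ofReal_one]; ring

theorem mid_bound {d : ℕ} (hd : 0 < d) (S : CZO d) (ρ : ℝ) (hρ : 1 ≤ ρ) : ∃ C : ℝ≥0∞, C ≠ ∞ ∧
    ∀ (f : Rd d → ℝ) (lam : ℝ) (F : Set (Cube d)) (g b : Rd d → ℝ) (P : Cube d) (x x' : Rd d),
      Measurable f → Integrable f → CZData f lam F g b → x ∈ P.set → dist x x' ≤ 2 * P.dm →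
      (∀ L ∈ F, 20 * L.dm ≤ dist x' L.ctr) →
      S.var ρ (((P.dilate 3)ᶜ ∩ Metric.closedBall x (100 * P.dm)).indicator f) x ≤
        C * ENNReal.ofReal lam := by
  have hC0 := S.hCst
  refine ⟨ENNReal.ofReal S.Cst * ENNReal.ofReal (1 + 2 ^ d) * (ENNReal.ofReal ((200 * d) ^ d) * kap d), ?_, ?_⟩
  · have := kap_ne_top d
    finiteness
  intro f lam F g b P x x' hm hi D hx hxx hg
  have hdm := P.dm_pos hd
  have hPl := P.hl
  set B := Metric.closedBall x (100 * P.dm) with hB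
  have hdil : MeasurableSet (P.dilate 3) := by
    have := (Cube.mk P.c (3 * P.l) (by positivity) : Cube d).meas
    exact this
  have hNm : MeasurableSet ((P.dilate 3)ᶜ ∩ B) := hdil.compl.inter Metric.isClosed_closedBall.measurableSet
  have hfar : ∀ y, y ∉ P.dilate 3 → P.l ≤ dist x y := by
    intro y hy
    simp only [Cube.dilate, Set.mem_ofPred_eq, not_forall] at hy
    obtain ⟨i, hi⟩ := hy
    refine le_trans ?_ (coord_le_dist x y i)
    have h1 := hx i
    rw [not_and_or, not_le, not_lt] at hi
    rcases hi with hi | hi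
    · rw [le_abs]; left; linarith
    · rw [le_abs]; right; linarith
  calc _ ≤ ∫⁻ y, ‖S.K x y * ((P.dilate 3)ᶜ ∩ B).indicator f y‖ₑ := S.var_le_l1 hρ (hi.indicator hNm) x
    _ ≤ ∫⁻ y, B.indicator (fun y => ENNReal.ofReal (S.Cst / P.l ^ d) * ‖f y‖ₑ) y := by
        refine lintegral_mono fun y => ?_
        by_cases hy : y ∈ (P.dilate 3)ᶜ ∩ B
        · simp only [Set.indicator_of_mem hy, Set.indicator_of_mem hy.2]
          rw [enorm_mul]
          refine mul_le_mul_left ?_ _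
          rw [Real.enorm_eq_ofReal_abs]
          refine ENNReal.ofReal_le_ofReal ?_
          have hf := hfar y hy.1
          refine (S.size' x y (by linarith)).trans ?_
          gcongr
        · simp only [Set.indicator_of_notMem hy]; simp
    _ = ENNReal.ofReal (S.Cst / P.l ^ d) * ∫⁻ y in B, ‖f y‖ₑ := by
        rw [lintegral_indicator Metric.isClosed_closedBall.measurableSet,
          lintegral_const_mul' _ _ ENNReal.ofReal_ne_top]
    _ ≤ ENNReal.ofReal (S.Cst / P.l ^ d) * (ENNReal.ofReal (1 + 2 ^ d) * ENNReal.ofReal lam *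
          volume (Metric.closedBall x (2 * (100 * P.dm)))) :=
        mul_le_mul_right (ball_mass D x x' _ (by positivity) (by linarith) hg) _
    _ = _ := by
        rw [vol_cball _ (by positivity), Cube.dm,
          show (2 * (100 * ((d:ℝ) * P.l))) ^ d = (200 * d) ^ d * P.l ^ d by rw [← mul_pow]; ring,
          ENNReal.ofReal_mul (p := (200 * (d:ℝ)) ^ d) (by positivity)]
        have e : ENNReal.ofReal (S.Cst / P.l ^ d) * ENNReal.ofReal (P.l ^ d) = ENNReal.ofReal S.Cst := by
          rw [← ENNReal.ofReal_mul (by positivity)]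
          congr 1; field_simp
        rw [← e]; ring

theorem bad_bound' {d : ℕ} (hd : 0 < d) (S : CZO d) (ρ : ℝ) (hρ : 2 ≤ ρ) : ∃ C : ℝ≥0∞, C ≠ ∞ ∧
    ∀ (f : Rd d → ℝ) (lam : ℝ) (F : Set (Cube d)) (g b : Rd d → ℝ) (x x' : Rd d) (R : ℝ),
      0 < lam → CZData f lam F g b → GoodPt S ρ lam F g b x' →
      (∀ L ∈ F, (∃ z ∈ L.set, R < dist x z) → dist x' L.ctr ≤ 2 * dist x L.ctr) →
      S.var ρ ({y | R < dist x y}.indicator b) x ≤ C * ENNReal.ofReal lam := by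
  obtain ⟨C, hC, h⟩ := bad_bound hd S hρ
  refine ⟨C + C * ENNReal.ofReal (2 * 2 ^ d) ^ ((1:ℝ)/2), ?_, ?_⟩
  · have : ENNReal.ofReal (2 * 2 ^ d) ^ ((1:ℝ)/2) ≠ ∞ :=
      ENNReal.rpow_ne_top_of_nonneg (by norm_num) ENNReal.ofReal_ne_top
    finiteness
  intro f lam F g b x x' R hl D hG hx
  set t := ENNReal.ofReal lam with ht
  refine (h F b (2 * 2 ^ d * lam) x x' R D.cnt D.dis D.bm D.bi D.b0 D.bL D.bLe (by positivity)
    hG.2.1 hx).trans ?_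
  have hW := hG.2.2
  have e : (ENNReal.ofReal (2 * 2 ^ d * lam) * t) ^ ((1:ℝ)/2) = ENNReal.ofReal (2 * 2 ^ d) ^ ((1:ℝ)/2) * t := by
    rw [ENNReal.ofReal_mul (by positivity), ← ht, mul_assoc, ENNReal.mul_rpow_of_nonneg _ _ (by norm_num)]
    congr 1
    rw [← sq, ← ENNReal.rpow_natCast, ← ENNReal.rpow_mul]; norm_num
  calc _ ≤ C * t + C * (ENNReal.ofReal (2 * 2 ^ d * lam) * t) ^ ((1:ℝ)/2) := by
        refine add_le_add (mul_le_mul_right hW _) (mul_le_mul_right ?_ _)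
        exact ENNReal.rpow_le_rpow (mul_le_mul_right hW _) (by norm_num)
    _ = _ := by rw [e]; ring

theorem pt_bound {d : ℕ} (hd : 0 < d) (S : CZO d) (ρ : ℝ) (hρ : 2 ≤ ρ) : ∃ C : ℝ≥0∞, C ≠ ∞ ∧
    ∀ (f : Rd d → ℝ) (lam : ℝ) (F : Set (Cube d)) (g b : Rd d → ℝ),
      0 < lam → Measurable f → Integrable f → CZData f lam F g b →
      (∀ x, GoodPt S ρ lam F g b x → S.var ρ f x ≤ C * ENNReal.ofReal lam) ∧
      (∀ (P : Cube d) (x x' : Rd d), x ∈ P.set → dist x x' ≤ 2 * P.dm → GoodPt S ρ lam F g b x' →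
        S.var ρ f x ≤ C * ENNReal.ofReal lam + S.var ρ ((P.dilate 3).indicator f) x) := by
  obtain ⟨C1, hC1, h1⟩ := mid_bound hd S ρ (by linarith)
  obtain ⟨C2, hC2, h2⟩ := bad_bound' hd S ρ hρ
  obtain ⟨C3, hC3, h3⟩ := good_shift hd S hρ
  have hρ1 : 1 ≤ ρ := by linarith
  refine ⟨C1 + C2 + (1 + C3 * ENNReal.ofReal (2 ^ d)), by finiteness, ?_⟩
  intro f lam F g b hl hm hi D
  set t := ENNReal.ofReal lam with ht
  constructor
  · intro x hG
    rw [S.var_congr ρ D.fgb x]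
    have e : {y : Rd d | (-1:ℝ) < dist x y}.indicator b = b := by
      refine Set.indicator_eq_self.2 fun y _ => ?_
      have : 0 ≤ dist x y := dist_nonneg
      show (-1:ℝ) < dist x y
      linarith
    have hb := h2 f lam F g b x x (-1) hl D hG
      (fun L _ _ => by have : 0 ≤ dist x L.ctr := dist_nonneg
                       linarith)
    rw [e] at hb
    calc _ ≤ S.var ρ g x + S.var ρ b x := S.var_add_le hρ1 D.gi D.bi x
      _ ≤ t + C2 * t := add_le_add hG.1 hb
      _ ≤ C1 * t + C2 * t + (t + C3 * ENNReal.ofReal (2 ^ d) * t) := by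
          rw [add_comm t]
          exact add_le_add le_add_self le_self_add
      _ = _ := by ring
  · intro P x x' hx hxx hG
    have hdm := P.dm_pos hd
    have hPl := P.hl
    set R := 100 * P.dm with hR
    set A := (P.dilate 3)ᶜ ∩ Metric.closedBall x R with hA
    set O := {y : Rd d | R < dist x y} with hO
    have hdil : MeasurableSet (P.dilate 3) := by
      have := (Cube.mk P.c (3 * P.l) (by positivity) : Cube d).meas
      exact this
    have hAm : MeasurableSet A := hdil.compl.inter Metric.isClosed_closedBall.measurableSet
    have hOm : MeasurableSet O := meas_gt x R
    have hdec : f = fun y => (P.dilate 3).indicator f y + (A.indicator f y + O.indicator f y) := by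
      funext y
      by_cases hy : y ∈ P.dilate 3
      · have hyO : y ∉ O := by
          have : dist x y ≤ d * (2 * P.l) := by
            refine dist_le_of_coord x y _ fun i => ?_
            have a1 := hx i
            have a2 := hy i
            rw [abs_le]; constructor <;> linarith
          rw [hO, Set.mem_ofPred_eq, not_lt, hR, Cube.dm]
          have : 0 ≤ (d:ℝ) * P.l := by positivity
          linarith
        have hyA : y ∉ A := fun h => h.1 hy
        rw [Set.indicator_of_mem hy, Set.indicator_of_notMem hyA, Set.indicator_of_notMem hyO]; simp
      · rw [Set.indicator_of_notMem hy]
        by_cases hyO : y ∈ O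
        · have hyA : y ∉ A := by
            intro h
            have h' : dist y x ≤ R := h.2
            rw [dist_comm] at h'
            exact absurd hyO (not_lt.2 h')
          rw [Set.indicator_of_mem hyO, Set.indicator_of_notMem hyA]; simp
        · have hyA : y ∈ A := ⟨hy, by
            rw [Metric.mem_closedBall, dist_comm]; exact not_lt.1 hyO⟩
          rw [Set.indicator_of_notMem hyO, Set.indicator_of_mem hyA]; simp
    have hOc : O.indicator f =ᵐ[volume] fun y => O.indicator g y + O.indicator b y := by
      filter_upwards [D.fgb] with y hy
      by_cases hyO : y ∈ O
      · simp only [Set.indicator_of_mem hyO]; exact hy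
      · simp only [Set.indicator_of_notMem hyO]; simp
    have v1 : S.var ρ (A.indicator f) x ≤ C1 * t := h1 f lam F g b P x x' hm hi D hx hxx hG.2.1
    have v2 : S.var ρ (O.indicator g) x ≤ t + C3 * ENNReal.ofReal (2 ^ d * lam) :=
      (h3 g (2 ^ d * lam) x x' R D.gm D.gi (by positivity) D.gle (by positivity)
        (by rw [hR]; linarith)).trans (add_le_add hG.1 le_rfl)
    have v3 : S.var ρ (O.indicator b) x ≤ C2 * t := by
      refine h2 f lam F g b x x' R hl D hG ?_
      rintro L hL ⟨z, hz, hz2⟩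
      have a1 := hG.2.1 L hL
      have a2 := Cube.dist_le L hz L.ctr_mem
      have a3 := dist_triangle x' x L.ctr
      have a4 := dist_triangle x L.ctr z
      rw [dist_comm L.ctr z] at a4
      rw [dist_comm x' x] at a3
      linarith
    have v4 : S.var ρ (O.indicator f) x ≤ (t + C3 * ENNReal.ofReal (2 ^ d * lam)) + C2 * t := by
      rw [S.var_congr ρ hOc x]
      exact (S.var_add_le hρ1 (D.gi.indicator hOm) (D.bi.indicator hOm) x).trans (add_le_add v2 v3)
    calc S.var ρ f x = S.var ρ (fun y => (P.dilate 3).indicator f y + (A.indicator f y + O.indicator f y)) x := by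
          rw [← hdec]
      _ ≤ S.var ρ ((P.dilate 3).indicator f) x + S.var ρ (fun y => A.indicator f y + O.indicator f y) x :=
          S.var_add_le hρ1 (hi.indicator hdil) ((hi.indicator hAm).add (hi.indicator hOm)) x
      _ ≤ S.var ρ ((P.dilate 3).indicator f) x + (S.var ρ (A.indicator f) x + S.var ρ (O.indicator f) x) :=
          add_le_add le_rfl (S.var_add_le hρ1 (hi.indicator hAm) (hi.indicator hOm) x)
      _ ≤ S.var ρ ((P.dilate 3).indicator f) x + (C1 * t + ((t + C3 * ENNReal.ofReal (2 ^ d * lam)) + C2 * t)) :=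
          add_le_add le_rfl (add_le_add v1 v4)
      _ = _ := by
          rw [ENNReal.ofReal_mul (by positivity), ← ht]; ring

/-- One-sided sparse domination: for `f ∈ L^∞` supported in `Q₀` there are
pairwise disjoint dyadic subcubes `{P_j}` of `Q₀` of total measure at most `ε|Q₀|` such that
a.e. on `Q₀`, `V_ρ(T_*(fχ_{3Q₀})) ≤ C⟨|f|⟩_{3Q₀} + Σ_j V_ρ(T_*(fχ_{3P_j})) χ_{P_j}`. -/
theorem variation_sparse_domination_one_sided
    (d : ℕ) (hd : 0 < d) (S : CZO d) (ρ q : ℝ) (hρ : 2 < ρ) (hq : 1 < q)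
    (hbdd : S.VarBdd ρ q) (ε : ℝ) (hε0 : 0 < ε) (hε1 : ε < 1) :
    ∃ C : ℝ, 0 < C ∧ ∀ (Q₀ : Cube d) (f : Rd d → ℝ), Measurable f →
      (∃ M : ℝ, ∀ x, |f x| ≤ M) → (∀ x, x ∉ Q₀.set → f x = 0) →
      ∃ F : Set (Cube d), (∀ P ∈ F, IsDyadicSubcube Q₀ P) ∧
        F.PairwiseDisjoint Cube.set ∧
        (∑' P : F, (P : Cube d).vol) ≤ ENNReal.ofReal ε * Q₀.vol ∧
        ∀ᵐ x ∂(volume : Measure (Rd d)), x ∈ Q₀.set →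
          S.var ρ ((Q₀.dilate 3).indicator f) x ≤
            ENNReal.ofReal (C * avg3 Q₀ f) +
              ∑' P : F, Set.indicator (P : Cube d).set
                (fun _ => S.var ρ (((P : Cube d).dilate 3).indicator f) x) x := by
  obtain ⟨C2, hC2, hexc⟩ := exc_bound hd S ρ q (by linarith) hq hbdd
  obtain ⟨C3, hC3, hpt⟩ := pt_bound hd S ρ hρ.le
  set C1 : ℝ := (C2.toReal + 1) / ε with hC1
  have hC2r : 0 ≤ C2.toReal := ENNReal.toReal_nonneg
  have hC3r : 0 ≤ C3.toReal := ENNReal.toReal_nonneg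
  have hC1e : C1 * ε = C2.toReal + 1 := by rw [hC1]; field_simp
  have hC11 : 1 ≤ C1 := by
    rw [hC1, le_div_iff₀ hε0]; linarith
  refine ⟨C3.toReal * (C1 * 3 ^ d) + 1, by positivity, ?_⟩
  rintro Q₀ f hm ⟨M, hM⟩ hs
  have hlp := Q₀.hl
  have hsub3 : Q₀.set ⊆ Q₀.dilate 3 := by
    intro y hy i
    have := hy i
    constructor <;> linarith
  have hf3 : (Q₀.dilate 3).indicator f = f := by
    refine Set.indicator_eq_self.2 fun y hy => ?_
    by_contra h
    exact hy (hs y fun h' => h (hsub3 h'))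
  have hi : Integrable f := by
    have h1 : IntegrableOn f Q₀.set := by
      refine Measure.integrableOn_of_bounded (M := M) ?_ hm.aestronglyMeasurable
        (Eventually.of_forall fun y => hM y)
      rw [Q₀.volume_set]; exact Q₀.vol_ne_top
    exact (integrableOn_iff_integrable_of_support_subset fun y hy => by
      by_contra h; exact hy (hs y h)).1 h1
  set I : ℝ := ∫ y, |f y| with hI
  have hI0 : 0 ≤ I := integral_nonneg fun y => abs_nonneg _
  have hN : ∫⁻ y, ‖f y‖ₑ = ENNReal.ofReal I := by
    rw [hI, ofReal_integral_eq_lintegral_ofReal hi.abs (Eventually.of_forall fun y => abs_nonneg _)]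
    simp only [Real.enorm_eq_ofReal_abs]
  have havg : avg3 Q₀ f = I / (3 * Q₀.l) ^ d := by
    unfold avg3
    rw [setIntegral_eq_integral_of_forall_compl_eq_zero]
    intro y hy
    rw [hs y fun h => hy (hsub3 h), abs_zero]
  rw [hf3]
  rcases hI0.eq_or_lt with hz | hIp
  · refine ⟨∅, by simp, by simp, by simp, Eventually.of_forall fun x hx => ?_⟩
    have hf0 : f =ᵐ[volume] fun _ => (0:ℝ) := by
      rw [← hz, ENNReal.ofReal_zero, lintegral_eq_zero_iff hm.enorm] at hN
      filter_upwards [hN] with y hy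
      simpa using hy
    rw [S.var_congr ρ hf0 x]
    refine le_trans (S.var_le_l1 (by linarith) (integrable_zero _ _ _) x) ?_
    simp
  set lam : ℝ := C1 * I / Q₀.l ^ d with hlam
  have hlp' : 0 < Q₀.l ^ d := by positivity
  have hl : 0 < lam := by positivity
  have hll : lam * Q₀.l ^ d = C1 * I := by rw [hlam]; field_simp
  obtain ⟨F, g, b, D⟩ := cz_decomp Q₀ f hm hi hs lam hl (by
    rw [hN, Cube.vol, ← ENNReal.ofReal_mul hl.le, hll]
    exact ENNReal.ofReal_le_ofReal (by nlinarith))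
  obtain ⟨E, hE, hEg⟩ := hexc f lam F g b hl D
  have hEv : volume E < ENNReal.ofReal ε * Q₀.vol := by
    by_contra h
    rw [not_lt] at h
    have h1 := (mul_le_mul_right h (ENNReal.ofReal lam)).trans hE
    rw [hN, Cube.vol, ← ENNReal.ofReal_toReal hC2, ← ENNReal.ofReal_mul hε0.le,
      ← ENNReal.ofReal_mul hl.le, ← ENNReal.ofReal_mul hC2r,
      ENNReal.ofReal_le_ofReal_iff (by positivity)] at h1
    have h2 : lam * (ε * Q₀.l ^ d) = (C2.toReal + 1) * I := by
      rw [← hC1e]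
      calc lam * (ε * Q₀.l ^ d) = ε * (lam * Q₀.l ^ d) := by ring
        _ = _ := by rw [hll]; ring
    rw [h2] at h1
    linarith
  obtain ⟨U, hEU, hU, hUv⟩ := Set.exists_isOpen_lt_of_lt E _ hEv
  obtain ⟨G, hc, hG1, hG2, hG3, hG4⟩ := maximal_cubes Q₀ (fun Q => Q.set ⊆ U)
  have hGU : (⋃ L ∈ G, Cube.set L) ⊆ U := Set.iUnion₂_subset fun P hP => (hG1 P hP).2.1
  have hnp : ¬ Q₀.set ⊆ U := by
    intro h
    have h1 := lt_of_le_of_lt (measure_mono h) hUv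
    rw [Q₀.volume_set] at h1
    refine absurd h1 (not_lt.2 ?_)
    calc ENNReal.ofReal ε * Q₀.vol ≤ 1 * Q₀.vol :=
          mul_le_mul_left (ENNReal.ofReal_le_one.2 hε1.le) _
      _ = _ := one_mul _
  obtain ⟨hp1, hp2⟩ := hpt f lam F g b hl hm hi D
  have hgood : ∀ z, z ∉ U → GoodPt S ρ lam F g b z := fun z hz => hEg z fun h => hz (hEU h)
  have hfin : C3 * ENNReal.ofReal lam ≤
      ENNReal.ofReal ((C3.toReal * (C1 * 3 ^ d) + 1) * avg3 Q₀ f) := by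
    conv_lhs => rw [← ENNReal.ofReal_toReal hC3]
    rw [← ENNReal.ofReal_mul hC3r]
    refine ENNReal.ofReal_le_ofReal ?_
    have h1 : lam = C1 * 3 ^ d * avg3 Q₀ f := by
      rw [havg, hlam, mul_pow]; field_simp
    have h2 : 0 ≤ avg3 Q₀ f := by rw [havg]; positivity
    rw [h1]
    nlinarith
  refine ⟨G, fun P hP => (hG1 P hP).1, hG2, ?_, Eventually.of_forall fun x hx => ?_⟩
  · rw [vol_iUnion G hc hG2]
    exact (measure_mono hGU).trans hUv.le
  · by_cases hxU : x ∈ U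
    · obtain ⟨Q, q1, q2, q3⟩ := small_cube Q₀ U hU x hx hxU
      have h1 := hG3 Q q1 q2 q3
      simp only [Set.mem_iUnion, exists_prop] at h1
      obtain ⟨P, hP, hxP⟩ := h1
      obtain ⟨P', -, p2, p3, -, p5⟩ := hG4 hnp P hP
      obtain ⟨x', hx'P, hx'U⟩ := Set.not_subset.1 p5
      have hdist : dist x x' ≤ 2 * P.dm := by
        refine (P'.dist_le (p2 hxP) hx'P).trans (le_of_eq ?_)
        rw [Cube.dm, Cube.dm, p3]; ring
      refine (hp2 P x x' hxP hdist (hgood x' hx'U)).trans (add_le_add hfin ?_)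
      refine le_trans (le_of_eq ?_) (ENNReal.le_tsum (⟨P, hP⟩ : G))
      rw [Set.indicator_of_mem hxP]
    · exact (hp1 x (hgood x hxU)).trans (hfin.trans le_self_add)
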